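/- Let X be a tree and let f : X → X be a continuous map with zero topological entropy. Then every infinite ω-limit set ω_f(x) of f is contained in the orbit Orb_f(I) = I ∪ f(I) ∪ … ∪ f^{s-1}(I) of some periodic arc I of f of period s. -/

import Mathlib

open Set Filter Topology Function
open scoped ENNReal

/-- A subset of a topological space is an *arc* if it is homeomorphic to `[0,1]`. -/
def IsArc {X : Type*} [TopologicalSpace X] (A : Set X) : Prop :=
  Nonempty (A ≃ₜ Set.Icc (0 : ℝ) 1)

/-- A point `p` is an *endpoint* of the arc `A` if `p ∈ A` and `A \ {p}` is connected. -/
def IsArcEndpoint {X : Type*} [TopologicalSpace X] (A : Set X) (p : X) : Prop :=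
  p ∈ A ∧ IsConnected (A \ {p})

/-- A subset is a *simple closed curve* if it is homeomorphic to the unit circle. -/
def IsSimpleClosedCurve {X : Type*} [TopologicalSpace X] (S : Set X) : Prop :=
  Nonempty (S ≃ₜ Metric.sphere (0 : ℂ) 1)

/-- A *tree* is a compact connected metric space which is a union of finitely many arcs,
any two of which are disjoint or intersect only in (one or both of) their endpoints,
and which contains no simple closed curve. -/
def IsTree (X : Type*) [MetricSpace X] : Prop :=
  CompactSpace X ∧ ConnectedSpace X ∧
    (∃ 𝒜 : Finset (Set X), (∀ A ∈ 𝒜, IsArc A) ∧ ⋃₀ (𝒜 : Set (Set X)) = Set.univ ∧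
      ∀ A ∈ 𝒜, ∀ B ∈ 𝒜, A ≠ B → ∀ p ∈ A ∩ B, IsArcEndpoint A p ∧ IsArcEndpoint B p) ∧
    ∀ S : Set X, ¬ IsSimpleClosedCurve S

/-- A *dendrite* is a locally connected continuum containing no simple closed curve. -/
def IsDendrite (X : Type*) [MetricSpace X] : Prop :=
  CompactSpace X ∧ ConnectedSpace X ∧ LocallyConnectedSpace X ∧
    ∀ S : Set X, ¬ IsSimpleClosedCurve S

/-- `𝒰` is a finite open cover of the subset `Y`. -/
def IsOpenCoverOn {X : Type*} [TopologicalSpace X] (Y : Set X) (𝒰 : Finset (Set X)) : Prop :=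
  (∀ U ∈ 𝒰, IsOpen U) ∧ Y ⊆ ⋃₀ (𝒰 : Set (Set X))

/-- `N(⋁_{i=1}^n f^{-a_i}(𝒰))`, relative to the subset `Y`: the minimal number `m` of elements
of the join cover `⋁_{i=1}^n f^{-a_i}(𝒰)` needed to cover `Y`. -/
noncomputable def seqCoverCountOn {X : Type*} (f : X → X) (Y : Set X) (a : ℕ → ℕ)
    (𝒰 : Finset (Set X)) (n : ℕ) : ℕ :=
  sInf { m | ∃ c : Fin m → Fin n → Set X, (∀ j i, c j i ∈ 𝒰) ∧
    Y ⊆ ⋃ j, ⋂ i, f^[a i.1] ⁻¹' c j i }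

/-- Topological sequence entropy of `f` restricted to the (invariant) subset `Y`,
with respect to the sequence `a`. -/
noncomputable def seqEntropyOn {X : Type*} [TopologicalSpace X] (f : X → X) (Y : Set X)
    (a : ℕ → ℕ) : ℝ≥0∞ :=
  ⨆ (𝒰 : Finset (Set X)) (_ : IsOpenCoverOn Y 𝒰),
    Filter.limsup
      (fun n : ℕ => ENNReal.ofReal (Real.log (seqCoverCountOn f Y a 𝒰 n) / n)) Filter.atTop

/-- Topological sequence entropy of `f : X → X` with respect to the sequence `a`. -/
noncomputable def seqEntropy {X : Type*} [TopologicalSpace X] (f : X → X) (a : ℕ → ℕ) : ℝ≥0∞ :=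
  seqEntropyOn f Set.univ a

/-- The ordinary topological entropy `h(f)`, i.e. the sequence entropy for `A = (0,1,2,…)`. -/
noncomputable def topEntropy {X : Type*} [TopologicalSpace X] (f : X → X) : ℝ≥0∞ :=
  seqEntropy f id

/-- `h_∞(f|_Y)`: the supremum over all strictly increasing sequences of positive integers of
the topological sequence entropies of `f` restricted to `Y`. -/
noncomputable def supSeqEntropyOn {X : Type*} [TopologicalSpace X] (f : X → X) (Y : Set X) :
    ℝ≥0∞ :=
  ⨆ (a : ℕ → ℕ) (_ : StrictMono a) (_ : 1 ≤ a 0), seqEntropyOn f Y a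

/-- `h_∞(f)`: the supremum of the topological sequence entropies of `f`. -/
noncomputable def supSeqEntropy {X : Type*} [TopologicalSpace X] (f : X → X) : ℝ≥0∞ :=
  supSeqEntropyOn f Set.univ

/-- The ω-limit set `ω_f(x) = ⋂_n closure {f^k(x) : k ≥ n}`. -/
def omegaLimitSet {X : Type*} [TopologicalSpace X] (f : X → X) (x : X) : Set X :=
  ⋂ n : ℕ, closure ((fun k => f^[k] x) '' Set.Ici n)

/-- `ω(f) = ⋃_x ω_f(x)`. -/
def omegaSet {X : Type*} [TopologicalSpace X] (f : X → X) : Set X :=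
  ⋃ x : X, omegaLimitSet f x

/-- The non-wandering set `Ω(f)`. -/
def nonWanderingSet {X : Type*} [TopologicalSpace X] (f : X → X) : Set X :=
  { x | ∀ U : Set X, IsOpen U → x ∈ U → ∃ n, 1 ≤ n ∧ (f^[n] ⁻¹' U ∩ U).Nonempty }

/-- There is an ε-chain from `x` to `y` under `f`. -/
def EpsChain {X : Type*} [MetricSpace X] (f : X → X) (ε : ℝ) (x y : X) : Prop :=
  ∃ n, 1 ≤ n ∧ ∃ c : ℕ → X, c 0 = x ∧ c n = y ∧ ∀ i < n, dist (f (c i)) (c (i + 1)) < ε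

/-- The chain recurrent set `CR(f)`. -/
def chainRecurrentSet {X : Type*} [MetricSpace X] (f : X → X) : Set X :=
  { x | ∀ ε > 0, EpsChain f ε x x }

/-- The chain recurrent set of the restriction `f|_Y`: chain recurrence witnessed by
ε-chains lying entirely inside `Y`. -/
def chainRecurrentSetOn {X : Type*} [MetricSpace X] (f : X → X) (Y : Set X) : Set X :=
  { x ∈ Y | ∀ ε > 0, ∃ n, 1 ≤ n ∧ ∃ c : ℕ → X, c 0 = x ∧ c n = x ∧
      (∀ i ≤ n, c i ∈ Y) ∧ ∀ i < n, dist (f (c i)) (c (i + 1)) < ε }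

/-- `I` is a periodic arc of `f` of period `s`: an arc with `f^s(I) ⊆ I` whose iterates
`I, f(I), …, f^{s-1}(I)` are pairwise disjoint. -/
def IsPeriodicArc {X : Type*} [TopologicalSpace X] (f : X → X) (I : Set X) (s : ℕ) : Prop :=
  IsArc I ∧ 1 ≤ s ∧ Set.MapsTo f^[s] I I ∧
    ∀ i j, i < j → j < s → Disjoint (f^[i] '' I) (f^[j] '' I)

/-- `Orb_f(I) = I ∪ f(I) ∪ … ∪ f^{s-1}(I)`. -/
def arcOrbit {X : Type*} (f : X → X) (I : Set X) (s : ℕ) : Set X :=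
  ⋃ i ∈ Finset.range s, f^[i] '' I

/-- `I` is an independence set for the pair `(U, V)` under `f`. -/
def IsIndepSetPair {X : Type*} (f : X → X) (U V : Set X) (I : Finset ℕ) : Prop :=
  ∀ J ⊆ I, J.Nonempty → ∀ s : ℕ → Bool,
    (⋂ j ∈ J, f^[j] ⁻¹' (if s j then U else V)).Nonempty

/-- `(x, y)` is an IN-pair of `(X, f)`. -/
def INPair {X : Type*} [TopologicalSpace X] (f : X → X) (x y : X) : Prop :=
  ∀ U ∈ nhds x, ∀ V ∈ nhds y, ∀ m : ℕ, ∃ I : Finset ℕ, m ≤ I.card ∧ IsIndepSetPair f U V I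

/-- The set `IN(X, f)` of IN-pairs of `(X, f)`. -/
def INPairs {X : Type*} [TopologicalSpace X] (f : X → X) : Set (X × X) :=
  { p | INPair f p.1 p.2 }

/-- `(x, y)` is an IN-pair of the restricted (sub)system `(Y, f|_Y)`, for `Y` invariant. -/
def INPairOn {X : Type*} [TopologicalSpace X] (f : X → X) (Y : Set X) (x y : X) : Prop :=
  x ∈ Y ∧ y ∈ Y ∧ ∀ U ∈ nhds x, ∀ V ∈ nhds y, ∀ m : ℕ, ∃ I : Finset ℕ, m ≤ I.card ∧
    ∀ J ⊆ I, J.Nonempty → ∀ s : ℕ → Bool,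
      (Y ∩ ⋂ j ∈ J, f^[j] ⁻¹' (if s j then U else V)).Nonempty

/-- `(x, y)` is a Li–Yorke pair for `f`. -/
def LiYorkePair {X : Type*} [MetricSpace X] (f : X → X) (x y : X) : Prop :=
  Filter.liminf (fun n : ℕ => dist (f^[n] x) (f^[n] y)) Filter.atTop = 0 ∧
    0 < Filter.limsup (fun n : ℕ => dist (f^[n] x) (f^[n] y)) Filter.atTop


/-- A separating free arc: a parametrised arc together with a retraction coordinate. -/
structure FreeArc {X : Type*} [TopologicalSpace X] (e : ℝ → X) (r : X → ℝ) : Prop where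
  ce : Continuous e
  cr : Continuous r
  re : ∀ t ∈ Icc (0:ℝ) 1, r (e t) = t
  er : ∀ y, r y ∈ Ioo (0:ℝ) 1 → e (r y) = y

theorem FreeArc.cover {X : Type*} [TopologicalSpace X] {e : ℝ → X} {r : X → ℝ}
    (H : FreeArc e r) {C : Set X} (hC : IsPreconnected C) {a b : X} (ha : a ∈ C) (hb : b ∈ C)
    {s : ℝ} (hs : s ∈ Ioo (0:ℝ) 1) (h1 : r a ≤ s) (h2 : s ≤ r b) : e s ∈ C := by
  obtain ⟨y, hy, hys⟩ := hC.intermediate_value ha hb H.cr.continuousOn ⟨h1, h2⟩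
  have := H.er y (by rw [hys]; exact hs)
  rw [hys] at this
  rw [this]; exact hy

theorem image_iter_mul {X : Type*} (f : X → X) {A B : Set X} {n : ℕ}
    (h1 : A ∪ B ⊆ f^[n] '' A) (k : ℕ) : A ∪ B ⊆ f^[n * (k + 1)] '' A := by
  induction k with
  | zero => simpa using h1
  | succ k ih =>
    have : f^[n * (k + 1 + 1)] '' A = f^[n * (k + 1)] '' (f^[n] '' A) := by
      rw [← image_comp, ← Function.iterate_add]; rfl
    rw [this]
    exact ih.trans (image_mono (subset_union_left.trans h1))

theorem exists_word {X : Type*} (f : X → X) {L : ℕ} (S : Bool → Set X)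
    (hne : ∀ b, (S b).Nonempty) (hS : ∀ b b', S b ⊆ f^[L] '' S b') (k : ℕ) :
    ∀ w : ℕ → Bool, ∃ y, ∀ i ≤ k, f^[L * i] y ∈ S (w i) := by
  induction k with
  | zero =>
    intro w
    obtain ⟨y, hy⟩ := hne (w 0)
    refine ⟨y, fun i hi => ?_⟩
    obtain rfl : i = 0 := by omega
    simpa using hy
  | succ k ih =>
    intro w
    obtain ⟨y, hy⟩ := ih (fun i => w (i + 1))
    have h0 : y ∈ S (w 1) := by simpa using hy 0 (Nat.zero_le _)
    obtain ⟨z, hz, rfl⟩ := hS (w 1) (w 0) h0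
    refine ⟨z, fun i hi => ?_⟩
    rcases i with _ | i
    · simpa using hz
    · have := hy i (by omega)
      rw [← Function.iterate_add_apply] at this
      rwa [Nat.mul_succ]

theorem horseshoe {X : Type*} [TopologicalSpace X] (f : X → X) (h0 : topEntropy f = 0)
    {A B : Set X} (hA : IsClosed A) (hB : IsClosed B) (hd : Disjoint A B) (hne : A.Nonempty)
    {n m : ℕ} (hn : 0 < n) (hm : 0 < m)
    (h1 : A ∪ B ⊆ f^[n] '' A) (h2 : A ∪ B ⊆ f^[m] '' B) : False := by
  classical
  obtain ⟨L, hL, hLA, hLB⟩ : ∃ L, 0 < L ∧ A ∪ B ⊆ f^[L] '' A ∧ A ∪ B ⊆ f^[L] '' B := by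
    refine ⟨n * m, Nat.mul_pos hn hm, ?_, ?_⟩
    · have := image_iter_mul f h1 (m - 1)
      rwa [Nat.sub_add_cancel hm] at this
    · rw [union_comm] at h2
      have := image_iter_mul f h2 (n - 1)
      rwa [Nat.sub_add_cancel hn, union_comm, mul_comm] at this
  let S : Bool → Set X := fun b => if b then A else B
  have hBne : B.Nonempty := by
    obtain ⟨a, ha⟩ := hne
    obtain ⟨b, hb, -⟩ := h2 (Or.inl ha)
    exact ⟨b, hb⟩
  have hSne : ∀ b, (S b).Nonempty := by rintro (_ | _) <;> simp [S, hne, hBne]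
  have hS : ∀ b b', S b ⊆ f^[L] '' S b' := by
    rintro (_ | _) (_ | _)
    · exact subset_union_right.trans hLB
    · exact subset_union_right.trans hLA
    · exact subset_union_left.trans hLB
    · exact subset_union_left.trans hLA
  let 𝒰 : Finset (Set X) := {Aᶜ, Bᶜ}
  have hcov : IsOpenCoverOn (univ : Set X) 𝒰 := by
    refine ⟨?_, ?_⟩
    · intro U hU
      simp only [𝒰, Finset.mem_insert, Finset.mem_singleton] at hU
      rcases hU with rfl | rfl
      · exact hA.isOpen_compl
      · exact hB.isOpen_compl
    · intro y _
      by_cases hy : y ∈ A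
      · exact ⟨Bᶜ, by simp [𝒰], fun hyB => hd.le_bot ⟨hy, hyB⟩⟩
      · exact ⟨Aᶜ, by simp [𝒰], hy⟩
  have hnonempty : ∀ N : ℕ, { m | ∃ c : Fin m → Fin N → Set X, (∀ j i, c j i ∈ 𝒰) ∧
    (univ : Set X) ⊆ ⋃ j, ⋂ i, f^[id i.1] ⁻¹' c j i }.Nonempty := by
    intro N
    let E := (Fintype.equivFin (Fin N → 𝒰))
    refine ⟨Fintype.card (Fin N → 𝒰), fun j i => ((E.symm j) i : Set X),
      fun j i => ((E.symm j) i).2, ?_⟩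
    intro y _
    have hch : ∀ i : Fin N, ∃ U : 𝒰, f^[i.1] y ∈ (U : Set X) := by
      intro i
      obtain ⟨U, hU, hyU⟩ := hcov.2 (mem_univ (f^[i.1] y))
      exact ⟨⟨U, hU⟩, hyU⟩
    choose g hg using hch
    refine mem_iUnion.2 ⟨E g, mem_iInter.2 fun i => ?_⟩
    simpa using hg i
  have hcount : ∀ k : ℕ, 2 ^ k ≤ seqCoverCountOn f univ id 𝒰 (L * k) := by
    intro k
    refine le_csInf (hnonempty _) ?_
    rintro m ⟨c, hc, hcv⟩
    have hw : ∀ w : Fin k → Bool, ∃ j : Fin m, ∃ y, (∀ i : Fin k, f^[L * i] y ∈ S (w i)) ∧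
        ∀ i : Fin (L * k), f^[i.1] y ∈ c j i := by
      intro w
      obtain ⟨y, hy⟩ := exists_word f S hSne hS k
        (fun i => if h : i < k then w ⟨i, h⟩ else true)
      obtain ⟨j, hj⟩ := mem_iUnion.1 (hcv (mem_univ y))
      refine ⟨j, y, fun i => ?_, fun i => ?_⟩
      · have := hy i i.2.le
        simpa using this
      · simpa using mem_iInter.1 hj i
    choose j y hy1 hy2 using hw
    have hinj : Function.Injective j := by
      intro w w' hww
      funext i
      have hlt : L * i.1 < L * k := Nat.mul_lt_mul_of_pos_left i.2 hL
      have a1 := hy2 w ⟨L * i.1, hlt⟩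
      have a2 := hy2 w' ⟨L * i.1, hlt⟩
      rw [← hww] at a2
      have b1 := hy1 w i
      have b2 := hy1 w' i
      have hU := hc (j w) ⟨L * i.1, hlt⟩
      simp only [𝒰, Finset.mem_insert, Finset.mem_singleton] at hU
      simp only at a1 a2
      rcases hU with hU | hU <;> rw [hU] at a1 a2 <;> cases hwi : w i <;> cases hwi' : w' i <;>
        simp_all [S]
    have := Fintype.card_le_of_injective j hinj
    simpa using this
  have hlim : ENNReal.ofReal (Real.log 2 / L) ≤ Filter.limsup
      (fun n : ℕ => ENNReal.ofReal (Real.log (seqCoverCountOn f univ id 𝒰 n) / n))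
        Filter.atTop := by
    refine le_limsup_of_frequently_le' ?_
    rw [frequently_atTop]
    intro a
    refine ⟨L * (a + 1), by nlinarith, ?_⟩
    apply ENNReal.ofReal_le_ofReal
    have hLr : (0:ℝ) < L := by exact_mod_cast hL
    have hc := hcount (a + 1)
    have : Real.log ((2:ℝ) ^ (a + 1)) ≤ Real.log (seqCoverCountOn f univ id 𝒰 (L * (a + 1))) := by
      apply Real.log_le_log (by positivity)
      exact_mod_cast hc
    rw [Real.log_pow] at this
    push_cast at this ⊢
    rw [div_le_div_iff₀ hLr (by positivity)]
    nlinarith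
  have hle : Filter.limsup
      (fun n : ℕ => ENNReal.ofReal (Real.log (seqCoverCountOn f univ id 𝒰 n) / n))
        Filter.atTop ≤ topEntropy f := by
    unfold topEntropy seqEntropy seqEntropyOn
    exact le_iSup₂_of_le 𝒰 hcov le_rfl
  rw [h0] at hle
  have hpos : 0 < ENNReal.ofReal (Real.log 2 / L) := by
    rw [ENNReal.ofReal_pos]
    have := Real.log_pos (by norm_num : (1:ℝ) < 2)
    positivity
  exact absurd (hlim.trans hle) (not_le.2 hpos)


theorem FreeArc.reflect {X : Type*} [TopologicalSpace X] {e : ℝ → X} {r : X → ℝ}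
    (H : FreeArc e r) : FreeArc (fun t => e (1 - t)) (fun y => 1 - r y) where
  ce := H.ce.comp (by fun_prop)
  cr := continuous_const.sub H.cr
  re := fun t ht => by
    rw [H.re (1 - t) ⟨by linarith [ht.2], by linarith [ht.1]⟩]; ring
  er := fun y hy => by
    simp only [sub_sub_cancel]
    exact H.er y ⟨by linarith [hy.2], by linarith [hy.1]⟩

theorem FreeArc.isPreconnected_image {X : Type*} [TopologicalSpace X] {e : ℝ → X} {r : X → ℝ}
    (H : FreeArc e r) (a b : ℝ) : IsPreconnected (e '' Icc a b) :=
  isPreconnected_Icc.image _ H.ce.continuousOn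

theorem FreeArc.fix {X : Type*} [TopologicalSpace X] {e : ℝ → X} {r : X → ℝ}
    (H : FreeArc e r) {F : X → X} (hF : Continuous F) {u w : ℝ} (hu : 0 < u) (huw : u < w)
    (hw : w < 1) (h1 : u < r (F (e u))) (h2 : r (F (e w)) < w) :
    ∃ z ∈ Ioo u w, F (e z) = e z := by
  have hc : ContinuousOn (fun t => t - r (F (e t))) (Icc u w) :=
    (continuous_id.sub (H.cr.comp (hF.comp H.ce))).continuousOn
  obtain ⟨z, hz, hz0⟩ := intermediate_value_Ioo huw.le hc
    (show (0:ℝ) ∈ Ioo _ _ from ⟨by linarith, by linarith⟩)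
  refine ⟨z, hz, ?_⟩
  have hrz : r (F (e z)) = z := by simp only at hz0; linarith
  have := H.er (F (e z)) (by rw [hrz]; exact ⟨by linarith [hz.1], by linarith [hz.2]⟩)
  rw [hrz] at this
  exact this.symm

theorem FreeArc.mono_right {X : Type*} [TopologicalSpace X] {e : ℝ → X} {r : X → ℝ}
    (H : FreeArc e r) {f : X → X} (hf : Continuous f) {α β : ℝ} (hα : 0 ≤ α) (hβ : β ≤ 1)
    (hno : ∀ z ∈ Ioo α β, ∀ n, 0 < n → f^[n] (e z) ≠ e z) {u : ℝ} (hu : u ∈ Ioo α β) {k : ℕ}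
    (hk : 0 < k) (h : r (f^[k] (e u)) ∈ Ioo u β) (i : ℕ) (hi : 0 < i) :
    u < r (f^[k * i] (e u)) := by
  have hu01 : u ∈ Ioo (0:ℝ) 1 := ⟨by linarith [hu.1], by linarith [hu.2]⟩
  induction i with
  | zero => omega
  | succ i ih =>
    rcases Nat.eq_zero_or_pos i with rfl | hi0
    · simpa using h.1
    have ih := ih hi0
    by_contra hcon
    push Not at hcon
    set w := r (f^[k] (e u)) with hwdef
    have hew : e w = f^[k] (e u) :=
      H.er _ ⟨by linarith [h.1, hu01.1], by linarith [h.2]⟩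
    have hFw : f^[k * i] (e w) = f^[k * (i + 1)] (e u) := by
      rw [hew, ← Function.iterate_add_apply]; rfl
    obtain ⟨z, hz, hfz⟩ := H.fix (hf.iterate (k * i)) hu01.1 h.1 (by linarith [h.2]) ih
      (by rw [hFw]; linarith [h.1])
    exact hno z ⟨by linarith [hz.1, hu.1], by linarith [hz.2, h.2]⟩ _ (Nat.mul_pos hk hi0) hfz

theorem FreeArc.mono_left {X : Type*} [TopologicalSpace X] {e : ℝ → X} {r : X → ℝ}
    (H : FreeArc e r) {f : X → X} (hf : Continuous f) {α β : ℝ} (hα : 0 ≤ α) (hβ : β ≤ 1)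
    (hno : ∀ z ∈ Ioo α β, ∀ n, 0 < n → f^[n] (e z) ≠ e z) {u : ℝ} (hu : u ∈ Ioo α β) {k : ℕ}
    (hk : 0 < k) (h : r (f^[k] (e u)) ∈ Ioo α u) (i : ℕ) (hi : 0 < i) :
    r (f^[k * i] (e u)) < u := by
  have := H.reflect.mono_right hf (α := 1 - β) (β := 1 - α) (by linarith) (by linarith)
    (fun z hz => hno (1 - z) ⟨by linarith [hz.2], by linarith [hz.1]⟩) (u := 1 - u)
    ⟨by linarith [hu.2], by linarith [hu.1]⟩ hk
    (by simp only [sub_sub_cancel]; exact ⟨by linarith [h.2], by linarith [h.1]⟩) i hi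
  simp only [sub_sub_cancel] at this
  linarith

/-- parameters of the points of the limit set on the free arc -/
def arcPar {X : Type*} [TopologicalSpace X] (f : X → X) (x : X) (e : ℝ → X) : Set ℝ :=
  {τ | τ ∈ Ioo (0:ℝ) 1 ∧ e τ ∈ omegaLimitSet f x}

theorem omega_visit {X : Type*} [TopologicalSpace X] {f : X → X} {x y : X}
    (hy : y ∈ omegaLimitSet f x) {U : Set X} (hU : IsOpen U) (hyU : y ∈ U) (N : ℕ) :
    ∃ t, N ≤ t ∧ f^[t] x ∈ U := by
  have := mem_iInter.1 hy N
  obtain ⟨_, hzU, t, ht, rfl⟩ := mem_closure_iff.1 this U hU hyU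
  exact ⟨t, ht, hzU⟩

theorem FreeArc.visit {X : Type*} [TopologicalSpace X] {e : ℝ → X} {r : X → ℝ}
    (H : FreeArc e r) {f : X → X} {x : X} {τ α β : ℝ} (hτ : τ ∈ arcPar f x e)
    (h1 : α < τ) (h2 : τ < β) (N : ℕ) : ∃ t, N ≤ t ∧ r (f^[t] x) ∈ Ioo α β := by
  refine omega_visit hτ.2 (U := r ⁻¹' Ioo α β) (isOpen_Ioo.preimage H.cr) ?_ N
  show r (e τ) ∈ Ioo α β
  rw [H.re τ (Ioo_subset_Icc_self hτ.1)]
  exact ⟨h1, h2⟩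

theorem FreeArc.exists_periodic {X : Type*} [TopologicalSpace X] {e : ℝ → X} {r : X → ℝ}
    (H : FreeArc e r) {f : X → X} (hf : Continuous f) {x : X} {α β τ₁ τ₂ : ℝ} (hα : 0 ≤ α)
    (hβ : β ≤ 1) (h1 : τ₁ ∈ arcPar f x e) (h2 : τ₂ ∈ arcPar f x e) (hα1 : α < τ₁) (h12 : τ₁ < τ₂)
    (h2β : τ₂ < β) : ∃ z ∈ Ioo α β, ∃ n, 0 < n ∧ f^[n] (e z) = e z := by
  by_contra hcon
  push Not at hcon
  obtain ⟨γ, hγ1, hγ2⟩ := exists_between h12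
  obtain ⟨i, -, hi⟩ := H.visit h1 hα1 hγ1 0
  obtain ⟨j, hij, hj⟩ := H.visit h2 hγ2 h2β (i + 1)
  obtain ⟨l, hjl, hl⟩ := H.visit h1 hα1 hγ1 (j + 1)
  set u := r (f^[i] x) with hu
  set w := r (f^[j] x) with hw
  have heu : e u = f^[i] x := H.er _ ⟨by linarith [hi.1], by linarith [hi.2]⟩
  have hew : e w = f^[j] x := H.er _ ⟨by linarith [hj.1], by linarith [hj.2]⟩
  have hu' : u ∈ Ioo α β := ⟨hi.1, by linarith [hi.2]⟩
  have hw' : w ∈ Ioo α β := ⟨by linarith [hj.1], hj.2⟩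
  have huw : u < w := by linarith [hi.2, hj.1]
  have k1 : f^[j - i] (e u) = f^[j] x := by
    rw [heu, ← Function.iterate_add_apply]; congr 2; omega
  have k2 : f^[l - j] (e w) = f^[l] x := by
    rw [hew, ← Function.iterate_add_apply]; congr 2; omega
  have m1 := H.mono_right hf hα hβ hcon hu' (k := j - i) (by omega)
    (by rw [k1]; exact ⟨huw, hj.2⟩) (l - j) (by omega)
  have m2 := H.mono_left hf hα hβ hcon hw' (k := l - j) (by omega)
    (by rw [k2]; exact ⟨hl.1, by linarith [hl.2, hj.1]⟩) (j - i) (by omega)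
  rw [mul_comm] at m2
  obtain ⟨z, hz, hfz⟩ := H.fix (hf.iterate ((j - i) * (l - j))) (by linarith [hi.1]) huw
    (by linarith [hj.2]) m1 m2
  exact hcon z ⟨by linarith [hz.1, hi.1], by linarith [hz.2, hj.2]⟩ _
    (Nat.mul_pos (by omega) (by omega)) hfz

theorem FreeArc.cover_Icc {X : Type*} [TopologicalSpace X] {e : ℝ → X} {r : X → ℝ}
    (H : FreeArc e r) {C : Set X} (hC : IsPreconnected C) {y z : X} (hy : y ∈ C) (hz : z ∈ C)
    {a b : ℝ} (ha : 0 < a) (hb : b < 1) (h1 : r y ≤ a) (h2 : b ≤ r z) : e '' Icc a b ⊆ C := by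
  rintro _ ⟨s, hs, rfl⟩
  exact H.cover hC hy hz ⟨by linarith [hs.1], by linarith [hs.2]⟩ (by linarith [hs.1])
    (by linarith [hs.2])

theorem image_iter_add {X : Type*} (f : X → X) (m n : ℕ) (V : Set X) :
    f^[m + n] '' V = f^[m] '' (f^[n] '' V) := by
  rw [Function.iterate_add, image_comp]

theorem FreeArc.stretch {X : Type*} [TopologicalSpace X] {e : ℝ → X} {r : X → ℝ}
    (H : FreeArc e r) {f : X → X} (hf : Continuous f) {M : ℕ} (hM : 0 < M) {a b l u : ℝ}
    (hl : 0 < l) (hu : u < 1) (hla : l ≤ a) (hab : a ≤ b) (hbu : b ≤ u)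
    (ha : f^[M] (e a) = e a) (hb : f^[M] (e b) = e b) (x : X) (c t : ℕ)
    (ht : r (f^[t] x) ∈ Icc a b)
    (h1 : ∀ N, ∃ k, N ≤ k ∧ r (f^[M * k] (f^[c] x)) ≤ l)
    (h2 : ∀ N, ∃ k, N ≤ k ∧ u ≤ r (f^[M * k] (f^[c] x))) :
    ∃ n, 0 < n ∧ e '' Icc l u ⊆ f^[M * n] '' (e '' Icc a b) := by
  set V := e '' Icc a b with hV
  have fixi : ∀ y, f^[M] y = y → ∀ n, f^[M * n] y = y := fun y hy n => by
    rw [Function.iterate_mul]; exact Function.iterate_fixed hy n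
  have hea : e a ∈ V := ⟨a, left_mem_Icc.2 hab, rfl⟩
  have heb : e b ∈ V := ⟨b, right_mem_Icc.2 hab, rfl⟩
  have hra : r (e a) = a := H.re a ⟨by linarith, by linarith⟩
  have hrb : r (e b) = b := H.re b ⟨by linarith, by linarith⟩
  have hVc : ∀ n, IsPreconnected (f^[n] '' V) := fun n =>
    (H.isPreconnected_image a b).image _ (hf.iterate n).continuousOn
  have hVV : V ⊆ f^[M] '' V := by
    refine H.cover_Icc (hVc M) (y := e a) (z := e b) ⟨_, hea, ha⟩ ⟨_, heb, hb⟩ (by linarith)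
      (by linarith) hra.le hrb.ge
  have hstep : ∀ n, f^[M * n] '' V ⊆ f^[M * (n + 1)] '' V := fun n => by
    have : f^[M * (n + 1)] '' V = f^[M * n] '' (f^[M] '' V) := image_iter_add f _ _ _
    rw [this]; exact image_mono hVV
  have hmono : Monotone (fun n => f^[M * n] '' V) := monotone_nat_of_le_succ hstep
  set W := ⋃ n, f^[M * n] '' V with hW
  have hWc : IsPreconnected W := isPreconnected_iUnion
    ⟨e a, mem_iInter.2 fun n => ⟨e a, hea, fixi _ ha n⟩⟩ (fun n => hVc _)
  have hVW : V ⊆ W := fun y hy => mem_iUnion.2 ⟨0, y, hy, by simp⟩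
  have hWM : ∀ n, f^[M * n] '' W ⊆ W := by
    rintro n _ ⟨y, hy, rfl⟩
    obtain ⟨k, z, hz, rfl⟩ := mem_iUnion.1 hy
    refine mem_iUnion.2 ⟨n + k, z, hz, ?_⟩
    rw [← Function.iterate_add_apply, mul_add]
  set d := c + M * t - t with hd
  have htM : t ≤ M * t := Nat.le_mul_of_pos_left t hM
  have hxt : f^[t] x ∈ V := by
    refine ⟨r (f^[t] x), ht, H.er _ ⟨by linarith [ht.1], by linarith [ht.2]⟩⟩
  have hxd : ∀ k, t ≤ k → f^[M * k] (f^[c] x) ∈ f^[d] '' W := by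
    intro k hk
    refine ⟨f^[M * (k - t)] (f^[t] x), hWM _ ⟨_, hVW hxt, rfl⟩, ?_⟩
    rw [← Function.iterate_add_apply, ← Function.iterate_add_apply, ← Function.iterate_add_apply]
    congr 1
    obtain ⟨k', rfl⟩ := Nat.exists_eq_add_of_le hk
    rw [Nat.add_sub_cancel_left, mul_add]
    omega
  have hWdc : IsPreconnected (f^[d] '' W) := hWc.image _ (hf.iterate d).continuousOn
  have hlu : e '' Icc l u ⊆ f^[d] '' W := by
    obtain ⟨k1, hk1, hk1'⟩ := h1 t
    obtain ⟨k2, hk2, hk2'⟩ := h2 t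
    exact H.cover_Icc hWdc (hxd k1 hk1) (hxd k2 hk2) hl hu hk1' hk2'
  have hWd : W ⊆ f^[d] '' W := by
    intro y hy
    obtain ⟨n, z, hz, rfl⟩ := mem_iUnion.1 hy
    have : z ∈ f^[d] '' W := hlu (image_mono (Icc_subset_Icc hla hbu) hz)
    obtain ⟨w, hw, rfl⟩ := this
    refine ⟨f^[M * n] w, hWM n ⟨w, hw, rfl⟩, ?_⟩
    rw [← Function.iterate_add_apply, ← Function.iterate_add_apply, add_comm]
  have hWk : ∀ k, f^[d] '' W ⊆ f^[d * (k + 1)] '' W := by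
    intro k
    induction k with
    | zero => simp
    | succ k ih =>
      have : f^[d * (k + 1 + 1)] '' W = f^[d * (k + 1)] '' (f^[d] '' W) := by
        rw [← image_comp, ← Function.iterate_add]; rfl
      rw [this]
      exact ih.trans (image_mono hWd)
  have hfin : f^[d] '' W ⊆ W := by
    have := hWk (M - 1)
    rw [Nat.sub_add_cancel hM, mul_comm] at this
    exact this.trans (hWM d)
  have hlW : e l ∈ W := hfin (hlu ⟨l, left_mem_Icc.2 (by linarith), rfl⟩)
  have huW : e u ∈ W := hfin (hlu ⟨u, right_mem_Icc.2 (by linarith), rfl⟩)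
  obtain ⟨n1, hn1⟩ := mem_iUnion.1 hlW
  obtain ⟨n2, hn2⟩ := mem_iUnion.1 huW
  refine ⟨n1 + n2 + 1, by omega, ?_⟩
  have g1 : e l ∈ f^[M * (n1 + n2 + 1)] '' V := hmono (show n1 ≤ n1 + n2 + 1 by omega) hn1
  have g2 : e u ∈ f^[M * (n1 + n2 + 1)] '' V := hmono (show n2 ≤ n1 + n2 + 1 by omega) hn2
  exact H.cover_Icc (hVc _) g1 g2 hl hu (H.re l ⟨by linarith, by linarith⟩).le
    (H.re u ⟨by linarith, by linarith⟩).ge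

theorem FreeArc.isClosed_image {X : Type*} [TopologicalSpace X] [T2Space X]
    {e : ℝ → X} {r : X → ℝ} (H : FreeArc e r) (a b : ℝ) : IsClosed (e '' Icc a b) :=
  (isCompact_Icc.image H.ce).isClosed

theorem FreeArc.disjoint_image {X : Type*} [TopologicalSpace X]
    {e : ℝ → X} {r : X → ℝ} (H : FreeArc e r) {a b c d : ℝ} (ha : 0 ≤ a) (hbc : b < c)
    (hd : d ≤ 1) : Disjoint (e '' Icc a b) (e '' Icc c d) := by
  rw [Set.disjoint_left]
  rintro _ ⟨s, hs, rfl⟩ ⟨t, ht, hst⟩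
  have hb1 : s ≤ b := hs.2
  have hc1 : c ≤ t := ht.1
  have h1 := H.re s ⟨by linarith [hs.1], by linarith [ht.2]⟩
  have h2 := H.re t ⟨by linarith [hs.1], by linarith [ht.2]⟩
  rw [hst, h1] at h2
  linarith

theorem FreeArc.phase1 {X : Type*} [TopologicalSpace X] [T2Space X] {e : ℝ → X} {r : X → ℝ}
    (H : FreeArc e r) {f : X → X} (hf : Continuous f) (h0 : topEntropy f = 0) {M : ℕ}
    (hM : 0 < M) {a b c d : ℝ} (ha : 0 < a) (hab : a < b) (hbc : b < c) (hcd : c < d)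
    (hd : d < 1) (fa : f^[M] (e a) = e a) (fb : f^[M] (e b) = e b) (fc : f^[M] (e c) = e c)
    (fd : f^[M] (e d) = e d) (x : X) (k t t' : ℕ) (ht : r (f^[t] x) ∈ Icc a b)
    (ht' : r (f^[t'] x) ∈ Icc c d)
    (h1 : ∀ N, ∃ n, N ≤ n ∧ r (f^[M * n] (f^[k] x)) ≤ a)
    (h2 : ∀ N, ∃ n, N ≤ n ∧ d ≤ r (f^[M * n] (f^[k] x))) : False := by
  obtain ⟨n, hn, hn'⟩ := H.stretch hf hM ha hd le_rfl hab.le (by linarith) fa fb x k t ht h1 h2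
  obtain ⟨m, hm, hm'⟩ := H.stretch hf hM ha hd (by linarith) hcd.le le_rfl fc fd x k t' ht' h1 h2
  have hsub : e '' Icc a b ∪ e '' Icc c d ⊆ e '' Icc a d := union_subset
    (image_mono (Icc_subset_Icc_right (by linarith)))
    (image_mono (Icc_subset_Icc_left (by linarith)))
  exact horseshoe f h0 (H.isClosed_image a b) (H.isClosed_image c d)
    (H.disjoint_image ha.le hbc hd.le) ⟨e a, a, left_mem_Icc.2 hab.le, rfl⟩
    (Nat.mul_pos hM hn) (Nat.mul_pos hM hm) (hsub.trans hn') (hsub.trans hm')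

theorem FreeArc.phase2R {X : Type*} [TopologicalSpace X] [T2Space X] {e : ℝ → X} {r : X → ℝ}
    (H : FreeArc e r) {f : X → X} (hf : Continuous f) (h0 : topEntropy f = 0) {M : ℕ}
    (hM : 0 < M) {z : X} (hz : f^[M] z = z) {a v b : ℝ} (ha : 0 < a) (hav : a < v) (hvb : v ≤ b)
    (hb : b < 1) (k : ℕ) (hv : f^[M * k] (e v) = z) (hzb : b < r z)
    (h1 : ∀ N, ∃ n, N ≤ n ∧ r (f^[M * n] (e a)) ≤ a)
    (h2 : ∀ N, ∃ n, N ≤ n ∧ r (f^[M * n] (e b)) ≤ a) : False := by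
  have hvn : ∀ n, k ≤ n → f^[M * n] (e v) = z := by
    intro n hn
    obtain ⟨m, rfl⟩ := Nat.exists_eq_add_of_le hn
    rw [mul_add, add_comm, Function.iterate_add_apply, hv, Function.iterate_mul]
    exact Function.iterate_fixed hz m
  obtain ⟨n, hn, hn'⟩ := h1 (k + 1)
  obtain ⟨m, hm, hm'⟩ := h2 (k + 1)
  obtain ⟨w, hw1, hw2, hw3⟩ : ∃ w, a < w ∧ w < v ∧ b < r (f^[M * n] (e w)) := by
    have hc : Continuous (fun t => r (f^[M * n] (e t))) :=
      H.cr.comp ((hf.iterate _).comp H.ce)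
    have hev : ∀ᶠ t in 𝓝[<] v, b < r (f^[M * n] (e t)) := by
      apply nhdsWithin_le_nhds
      apply hc.continuousAt.eventually_mem
      show Ioi b ∈ 𝓝 (r (f^[M * n] (e v)))
      rw [hvn n (by omega)]
      exact Ioi_mem_nhds hzb
    have hev2 : ∀ᶠ t in 𝓝[<] v, t ∈ Ioo a v := Ioo_mem_nhdsLT hav
    obtain ⟨w, hw, hw'⟩ := (hev.and hev2).exists
    exact ⟨w, hw'.1, hw'.2, hw⟩
  have hsub : e '' Icc a w ∪ e '' Icc v b ⊆ e '' Icc a b := union_subset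
    (image_mono (Icc_subset_Icc_right (by linarith)))
    (image_mono (Icc_subset_Icc_left (by linarith)))
  have c1 : e '' Icc a b ⊆ f^[M * n] '' (e '' Icc a w) :=
    H.cover_Icc ((H.isPreconnected_image a w).image _ (hf.iterate _).continuousOn)
      ⟨_, ⟨a, left_mem_Icc.2 hw1.le, rfl⟩, rfl⟩ ⟨_, ⟨w, right_mem_Icc.2 hw1.le, rfl⟩, rfl⟩
      ha hb hn' hw3.le
  have c2 : e '' Icc a b ⊆ f^[M * m] '' (e '' Icc v b) :=
    H.cover_Icc ((H.isPreconnected_image v b).image _ (hf.iterate _).continuousOn)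
      ⟨_, ⟨b, right_mem_Icc.2 hvb, rfl⟩, rfl⟩ ⟨_, ⟨v, left_mem_Icc.2 hvb, rfl⟩, rfl⟩
      ha hb hm' (by rw [hvn m (by omega)]; exact hzb.le)
  exact horseshoe f h0 (H.isClosed_image a w) (H.isClosed_image v b)
    (H.disjoint_image ha.le hw2 hb.le) ⟨e a, a, left_mem_Icc.2 hw1.le, rfl⟩
    (Nat.mul_pos hM (by omega)) (Nat.mul_pos hM (by omega)) (hsub.trans c1) (hsub.trans c2)

theorem FreeArc.phase2L {X : Type*} [TopologicalSpace X] [T2Space X] {e : ℝ → X} {r : X → ℝ}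
    (H : FreeArc e r) {f : X → X} (hf : Continuous f) (h0 : topEntropy f = 0) {M : ℕ}
    (hM : 0 < M) {z : X} (hz : f^[M] z = z) {a v b : ℝ} (ha : 0 < a) (hav : a ≤ v) (hvb : v < b)
    (hb : b < 1) (k : ℕ) (hv : f^[M * k] (e v) = z) (hzb : r z < a)
    (h1 : ∀ N, ∃ n, N ≤ n ∧ b ≤ r (f^[M * n] (e b)))
    (h2 : ∀ N, ∃ n, N ≤ n ∧ b ≤ r (f^[M * n] (e a))) : False := by
  refine H.reflect.phase2R hf h0 hM hz (a := 1 - b) (v := 1 - v) (b := 1 - a) (by linarith)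
    (by linarith) (by linarith) (by linarith) k (by simpa using hv) (by linarith) ?_ ?_
  · intro N
    obtain ⟨n, hn, hn'⟩ := h1 N
    refine ⟨n, hn, ?_⟩
    simp only [sub_sub_cancel]
    linarith
  · intro N
    obtain ⟨n, hn, hn'⟩ := h2 N
    refine ⟨n, hn, ?_⟩
    simp only [sub_sub_cancel]
    linarith


theorem mem_omega_of_tendsto {X ι : Type*} [TopologicalSpace X] {f : X → X} {x y : X}
    {F : Filter ι} [F.NeBot] {k : ι → ℕ} (hk : Tendsto k F atTop)
    (h : Tendsto (fun i => f^[k i] x) F (𝓝 y)) : y ∈ omegaLimitSet f x := by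
  refine mem_iInter.2 fun N => mem_closure_of_tendsto h ?_
  filter_upwards [hk.eventually (eventually_ge_atTop N)] with i hi
  exact ⟨k i, hi, rfl⟩

theorem exists_ultra_of_mem_omega {X : Type*} [TopologicalSpace X] {f : X → X} {x y : X}
    (hy : y ∈ omegaLimitSet f x) : ∃ U : Ultrafilter ℕ, (U : Filter ℕ) ≤ atTop ∧
      Tendsto (fun t => f^[t] x) U (𝓝 y) := by
  have : MapClusterPt y atTop (fun t => f^[t] x) := by
    rw [mapClusterPt_iff_frequently]
    intro s hs
    obtain ⟨V, hVs, hV, hyV⟩ := mem_nhds_iff.1 hs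
    rw [frequently_atTop]
    intro N
    obtain ⟨t, ht, h⟩ := omega_visit hy hV hyV N
    exact ⟨t, ht, hVs h⟩
  exact mapClusterPt_iff_ultrafilter.1 this

theorem omega_class_subset {X : Type*} [TopologicalSpace X] {f : X → X} {x : X} {M : ℕ}
    (hM : 0 < M) (c : ℕ) : omegaLimitSet (f^[M]) (f^[c] x) ⊆ omegaLimitSet f x := by
  intro y hy
  obtain ⟨U, hU, h⟩ := exists_ultra_of_mem_omega hy
  refine mem_omega_of_tendsto (F := (U : Filter ℕ)) (k := fun t => M * t + c) ?_ ?_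
  · refine Tendsto.mono_left ?_ hU
    refine tendsto_atTop_mono (f := fun t : ℕ => t) (fun t => ?_) tendsto_id
    have := Nat.le_mul_of_pos_left t hM
    show t ≤ M * t + c
    omega
  · refine h.congr fun t => ?_
    rw [← Function.iterate_mul, ← Function.iterate_add_apply]

theorem omega_classes {X : Type*} [TopologicalSpace X] [CompactSpace X] [T2Space X] {f : X → X}
    (hf : Continuous f) {x : X} {M : ℕ} (hM : 0 < M) (c : ℕ) {y : X}
    (hy : y ∈ omegaLimitSet f x) :
    ∃ d < M, y ∈ f^[d] '' omegaLimitSet (f^[M]) (f^[c] x) := by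
  obtain ⟨U, hU, h⟩ := exists_ultra_of_mem_omega hy
  obtain ⟨w, -, hw⟩ := isCompact_univ.ultrafilter_le_nhds
    (U.map (fun t => (f^[M])^[(t - c) / M] (f^[c] x))) (by simp)
  have hw' : Tendsto (fun t => (f^[M])^[(t - c) / M] (f^[c] x)) U (𝓝 w) := hw
  have hev : ∀ᶠ t in (U : Filter ℕ), ∃ d ∈ Finset.range M, (t - c) % M = d :=
    Eventually.of_forall fun t => ⟨_, Finset.mem_range.2 (Nat.mod_lt _ hM), rfl⟩
  obtain ⟨d, hd, hdU⟩ : ∃ d ∈ Finset.range M, ∀ᶠ t in (U : Filter ℕ), (t - c) % M = d := by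
    by_contra hcon
    push Not at hcon
    have : ∀ᶠ t in (U : Filter ℕ), ∀ d ∈ Finset.range M, (t - c) % M ≠ d :=
      (Filter.eventually_all_finset _).2 fun d hd => hcon d hd
    obtain ⟨t, ⟨d, hd, h1⟩, h2⟩ := (hev.and this).exists
    exact h2 d hd h1
  refine ⟨d, Finset.mem_range.1 hd, w, ?_, ?_⟩
  · refine mem_omega_of_tendsto (F := (U : Filter ℕ)) ?_ hw'
    refine Tendsto.mono_left ?_ hU
    rw [tendsto_atTop]
    intro b
    filter_upwards [eventually_ge_atTop (b * M + c)] with t ht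
    rw [Nat.le_div_iff_mul_le hM]
    omega
  · refine tendsto_nhds_unique (f := fun t => f^[t] x) (l := (U : Filter ℕ)) ?_ h
    refine (((hf.iterate d).tendsto w).comp hw').congr' ?_
    filter_upwards [hdU, hU (eventually_ge_atTop c)] with t ht1 ht2
    simp only [Function.comp]
    rw [← Function.iterate_mul, ← Function.iterate_add_apply, ← Function.iterate_add_apply]
    have h1 := Nat.mod_add_div (t - c) M
    have : d + M * ((t - c) / M) + c = t := by omega
    rw [this]

theorem omega_shift {X : Type*} [TopologicalSpace X] {f : X → X} (hf : Continuous f) {x : X}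
    (M d : ℕ) {y : X} (hy : y ∈ omegaLimitSet (f^[M]) x) :
    f^[d] y ∈ omegaLimitSet (f^[M]) (f^[d] x) := by
  obtain ⟨U, hU, h⟩ := exists_ultra_of_mem_omega hy
  refine mem_omega_of_tendsto (F := (U : Filter ℕ)) (k := id) hU ?_
  refine (((hf.iterate d).tendsto y).comp h).congr fun t => ?_
  simp only [Function.comp, id]
  rw [← Function.iterate_mul, ← Function.iterate_add_apply, ← Function.iterate_add_apply, add_comm]

theorem omega_exists_class {X : Type*} [TopologicalSpace X] [CompactSpace X] [T2Space X]
    {f : X → X} (hf : Continuous f) {x : X} {M : ℕ} (hM : 0 < M) {y : X}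
    (hy : y ∈ omegaLimitSet f x) : ∃ d < M, y ∈ omegaLimitSet (f^[M]) (f^[d] x) := by
  obtain ⟨d, hd, w, hw, rfl⟩ := omega_classes hf hM 0 hy
  exact ⟨d, hd, omega_shift hf M d hw⟩

theorem omega_class_infinite {X : Type*} [TopologicalSpace X] [CompactSpace X] [T2Space X]
    {f : X → X} (hf : Continuous f) {x : X} {M : ℕ} (hM : 0 < M)
    (h : (omegaLimitSet f x).Infinite) (c : ℕ) :
    (omegaLimitSet (f^[M]) (f^[c] x)).Infinite := by
  intro hfin
  refine h (((Set.finite_lt_nat M).biUnion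
    (t := fun d => f^[d] '' omegaLimitSet (f^[M]) (f^[c] x)) fun d _ => hfin.image _).subset ?_)
  intro y hy
  obtain ⟨d, hd, h⟩ := omega_classes hf hM c hy
  exact mem_biUnion (show d ∈ {d | d < M} from hd) h

theorem exists_incr {S : Set ℝ} (hS : S.Infinite) (n : ℕ) :
    ∃ g : ℕ → ℝ, (∀ i < n, g i ∈ S) ∧ ∀ i j, i < j → j < n → g i < g j := by
  obtain ⟨t, htS, htc⟩ := hS.exists_subset_card_eq n
  refine ⟨fun i => if h : i < n then t.orderEmbOfFin htc ⟨i, h⟩ else 0, ?_, ?_⟩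
  · intro i hi
    simp only [hi, dif_pos]
    exact htS (Finset.orderEmbOfFin_mem t htc _)
  · intro i j hij hj
    have hi : i < n := hij.trans hj
    simp only [hi, hj, dif_pos]
    exact (t.orderEmbOfFin htc).strictMono hij

theorem infinite_fiber {α β : Type*} {S : Set α} (hS : S.Infinite) (g : α → β)
    (h : (g '' S).Finite) : ∃ b, (S ∩ g ⁻¹' {b}).Infinite := by
  by_contra hcon
  push Not at hcon
  refine hS ((h.biUnion (t := fun b => S ∩ g ⁻¹' {b}) fun b _ => ?_).subset ?_)
  · exact hcon b
  · intro s hs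
    exact mem_biUnion (mem_image_of_mem g hs) ⟨hs, rfl⟩

theorem fix_of_dvd {X : Type*} {f : X → X} {y : X} {n M : ℕ} (h : f^[n] y = y) (hd : n ∣ M) :
    f^[M] y = y := by
  obtain ⟨k, rfl⟩ := hd
  rw [Function.iterate_mul]; exact Function.iterate_fixed h k

theorem omega_visit_pow {X : Type*} [TopologicalSpace X] {f : X → X} {x y : X} {M c : ℕ}
    (hy : y ∈ omegaLimitSet (f^[M]) (f^[c] x)) {U : Set X} (hU : IsOpen U) (hyU : y ∈ U) (N : ℕ) :
    ∃ t, N ≤ t ∧ f^[M * t] (f^[c] x) ∈ U := by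
  obtain ⟨t, ht, h⟩ := omega_visit hy hU hyU N
  rw [← Function.iterate_mul] at h
  exact ⟨t, ht, h⟩

theorem FreeArc.main1 {X : Type*} [TopologicalSpace X] [CompactSpace X] [T2Space X]
    {e : ℝ → X} {r : X → ℝ}
    (H : FreeArc e r) {f : X → X} (hf : Continuous f) (h0 : topEntropy f = 0) {x : X}
    {α β : ℝ} (hα : 0 ≤ α) (hβ : β ≤ 1) (hT : (arcPar f x e ∩ Ioo α β).Infinite) :
    ∃ p q, α < p ∧ p < q ∧ q < β ∧ (∃ M, 0 < M ∧ f^[M] (e p) = e p ∧ f^[M] (e q) = e q) ∧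
      (arcPar f x e ∩ Ioo p q).Infinite := by
  have hω : (omegaLimitSet f x).Infinite := by
    intro hfin
    refine hT (((hfin.image r)).subset ?_)
    rintro τ ⟨hτ, -⟩
    exact ⟨e τ, hτ.2, H.re τ (Ioo_subset_Icc_self hτ.1)⟩
  obtain ⟨g, hg, hlt⟩ := exists_incr hT 40
  have hper : ∀ i, i < 8 → ∃ z, z ∈ Ioo (g (5 * i)) (g (5 * i + 3)) ∧
      ∃ n, 0 < n ∧ f^[n] (e z) = e z := by
    intro i hi
    have a1 := hg (5 * i) (by omega)
    have a2 := hg (5 * i + 1) (by omega)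
    have a3 := hg (5 * i + 2) (by omega)
    have a4 := hg (5 * i + 3) (by omega)
    exact H.exists_periodic hf a1.1.1.1.le a4.1.1.2.le a2.1 a3.1 (hlt _ _ (by omega) (by omega))
      (hlt _ _ (by omega) (by omega)) (hlt _ _ (by omega) (by omega))
  choose! p hp n hn hfix using hper
  set M := ∏ i ∈ Finset.range 8, n i with hMdef
  have hM : 0 < M := Finset.prod_pos fun i hi => hn i (Finset.mem_range.1 hi)
  have hfM : ∀ i, i < 8 → f^[M] (e (p i)) = e (p i) := fun i hi =>
    fix_of_dvd (hfix i hi) (Finset.dvd_prod_of_mem n (Finset.mem_range.2 hi))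
  have hpg : ∀ i, i < 8 → p i < g (5 * i + 4) := fun i hi =>
    (hp i hi).2.trans (hlt _ _ (by omega) (by omega))
  have hgp : ∀ i, i < 7 → g (5 * i + 4) < p (i + 1) := fun i hi =>
    (hlt _ _ (by omega) (by omega)).trans (hp (i + 1) (by omega)).1
  have hpp : ∀ i, i < 7 → p i < p (i + 1) := fun i hi => (hpg i (by omega)).trans (hgp i hi)
  have hpr : ∀ i, i < 8 → α < p i ∧ p i < β := fun i hi =>
    ⟨(hg (5 * i) (by omega)).2.1.trans (hp i hi).1, (hp i hi).2.trans (hg (5 * i + 3) (by omega)).2.2⟩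
  have l0 := hpp 0 (by omega)
  have l1 := hpp 1 (by omega)
  have l2 := hpp 2 (by omega)
  have l3 := hpp 3 (by omega)
  have l4 := hpp 4 (by omega)
  have l5 := hpp 5 (by omega)
  have l6 := hpp 6 (by omega)
  norm_num at l0 l1 l2 l3 l4 l5 l6
  obtain ⟨b0, -⟩ := hpr 0 (by omega)
  obtain ⟨-, b7⟩ := hpr 7 (by omega)
  refine ⟨p 0, p 7, b0, by linarith, b7, ⟨M, hM, hfM 0 (by omega), hfM 7 (by omega)⟩, ?_⟩
  intro hfin
  obtain ⟨c, -, hc⟩ := omega_exists_class hf hM (hg 19 (by omega)).1.2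
  have hinf := omega_class_infinite hf hM hω c
  have hmid : ∀ N, ∃ t, N ≤ t ∧ r (f^[M * t] (f^[c] x)) ∈ Ioo (p 3) (p 4) := by
    intro N
    refine omega_visit_pow hc (U := r ⁻¹' Ioo (p 3) (p 4)) (isOpen_Ioo.preimage H.cr) ?_ N
    show r (e (g 19)) ∈ Ioo (p 3) (p 4)
    rw [H.re _ (Ioo_subset_Icc_self (hg 19 (by omega)).1.1)]
    exact ⟨hpg 3 (by omega), hgp 3 (by omega)⟩
  obtain ⟨y, hy, hyr⟩ : ∃ y ∈ omegaLimitSet (f^[M]) (f^[c] x), r y ∉ Icc (p 0) (p 7) := by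
    by_contra hcon
    push Not at hcon
    refine hinf (((hfin.union ((finite_singleton (p 0)).union (finite_singleton (p 7)))).image
      e).subset ?_)
    intro y hy
    have h1 := hcon y hy
    have h01 : r y ∈ Ioo (0:ℝ) 1 := ⟨by linarith [h1.1], by linarith [h1.2]⟩
    have h2 := H.er y h01
    refine ⟨r y, ?_, h2⟩
    rcases eq_or_lt_of_le h1.1 with h | h
    · exact Or.inr (Or.inl h.symm)
    rcases eq_or_lt_of_le h1.2 with h' | h'
    · exact Or.inr (Or.inr h')
    refine Or.inl ⟨⟨h01, ?_⟩, h, h'⟩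
    rw [h2]
    exact omega_class_subset hM c hy
  have hvis : ∀ i, i < 7 → ∃ t, r (f^[t] x) ∈ Icc (p i) (p (i + 1)) := by
    intro i hi
    obtain ⟨t, -, ht⟩ := H.visit (hg (5 * i + 4) (by omega)).1 (hpg i (by omega)) (hgp i hi) 0
    exact ⟨t, Ioo_subset_Icc_self ht⟩
  rcases lt_or_ge (r y) (p 0) with h | h
  · have hl : ∀ N, ∃ t, N ≤ t ∧ r (f^[M * t] (f^[c] x)) ≤ p 0 := by
      intro N
      obtain ⟨t, ht, h⟩ := omega_visit_pow hy (U := r ⁻¹' Iio (p 0)) (isOpen_Iio.preimage H.cr) h N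
      exact ⟨t, ht, le_of_lt h⟩
    obtain ⟨t, ht⟩ := hvis 0 (by omega)
    obtain ⟨t', ht'⟩ := hvis 2 (by omega)
    refine H.phase1 hf h0 hM (a := p 0) (b := p 1) (c := p 2) (d := p 3) (by linarith) l0 l1 l2
      (by linarith) (hfM 0 (by omega)) (hfM 1 (by omega)) (hfM 2 (by omega)) (hfM 3 (by omega))
      x c t t' ht ht' hl ?_
    intro N
    obtain ⟨t, ht, h⟩ := hmid N
    exact ⟨t, ht, h.1.le⟩
  · have h' : p 7 < r y := by
      by_contra hcon
      exact hyr ⟨h, not_lt.1 hcon⟩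
    have hl : ∀ N, ∃ t, N ≤ t ∧ p 7 ≤ r (f^[M * t] (f^[c] x)) := by
      intro N
      obtain ⟨t, ht, h⟩ := omega_visit_pow hy (U := r ⁻¹' Ioi (p 7)) (isOpen_Ioi.preimage H.cr) h' N
      exact ⟨t, ht, le_of_lt h⟩
    obtain ⟨t, ht⟩ := hvis 4 (by omega)
    obtain ⟨t', ht'⟩ := hvis 6 (by omega)
    refine H.phase1 hf h0 hM (a := p 4) (b := p 5) (c := p 6) (d := p 7) (by linarith) l4 l5 l6
      (by linarith) (hfM 4 (by omega)) (hfM 5 (by omega)) (hfM 6 (by omega)) (hfM 7 (by omega))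
      x c t t' ht ht' ?_ hl
    intro N
    obtain ⟨t, ht, h⟩ := hmid N
    exact ⟨t, ht, h.2.le⟩

theorem FreeArc.main2 {X : Type*} [TopologicalSpace X] [CompactSpace X] [T2Space X]
    {e : ℝ → X} {r : X → ℝ}
    (H : FreeArc e r) {f : X → X} (hf : Continuous f) (h0 : topEntropy f = 0) {x : X}
    {p q : ℝ} {M : ℕ} (hM : 0 < M) (fp : f^[M] (e p) = e p)
    (fq : f^[M] (e q) = e q) (hT : (arcPar f x e ∩ Ioo p q).Infinite) :
    ∃ a b, p < a ∧ a < b ∧ b < q ∧ (∃ τ ∈ arcPar f x e, τ ∈ Ioo a b) ∧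
      ∀ n, e p ∉ f^[n] '' (e '' Icc a b) ∧ e q ∉ f^[n] '' (e '' Icc a b) := by
  classical
  obtain ⟨c, hc⟩ : ∃ c, (arcPar (f^[M]) (f^[c] x) e ∩ Ioo p q).Infinite := by
    by_contra hcon
    push Not at hcon
    refine hT (((Set.finite_lt_nat M).biUnion
      (t := fun c => arcPar (f^[M]) (f^[c] x) e ∩ Ioo p q) fun c _ => ?_).subset ?_)
    · exact hcon c
    · rintro τ ⟨hτ, hpq⟩
      obtain ⟨d, hd, h⟩ := omega_exists_class hf hM hτ.2
      exact mem_biUnion (show d ∈ {d | d < M} from hd) ⟨⟨hτ.1, h⟩, hpq⟩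
  set P : Finset ℝ := (Finset.range M).image (fun k => r (f^[k] (e p))) ∪
    (Finset.range M).image (fun k => r (f^[k] (e q))) with hP
  obtain ⟨w, hw⟩ := infinite_fiber hc (fun τ => P.filter (fun s => s < τ))
    ((P.powerset.finite_toSet).subset (by
      rintro _ ⟨τ, -, rfl⟩
      exact Finset.mem_coe.2 (Finset.mem_powerset.2 (Finset.filter_subset _ _))))
  obtain ⟨g, hg, hlt⟩ := exists_incr hw 8
  have hP' : ∀ s ∈ P, s < g 7 → s < g 1 := by
    intro s hs h
    have e1 : P.filter (fun s => s < g 7) = w := (hg 7 (by omega)).2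
    have e2 : P.filter (fun s => s < g 1) = w := (hg 1 (by omega)).2
    have : s ∈ P.filter (fun s => s < g 7) := Finset.mem_filter.2 ⟨hs, h⟩
    rw [e1, ← e2] at this
    exact (Finset.mem_filter.1 this).2
  have l1 := hlt 1 2 (by omega) (by omega)
  have l2 := hlt 2 3 (by omega) (by omega)
  have l3 := hlt 3 4 (by omega) (by omega)
  have l4 := hlt 4 5 (by omega) (by omega)
  have l5 := hlt 5 6 (by omega) (by omega)
  have l6 := hlt 6 7 (by omega) (by omega)
  have gT : ∀ i, i < 8 → g i ∈ arcPar (f^[M]) (f^[c] x) e := fun i hi => (hg i hi).1.1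
  have g1 := (gT 1 (by omega)).1
  have g7 := (gT 7 (by omega)).1
  obtain ⟨ta, -, hta⟩ := H.visit (gT 2 (by omega)) (show (g 1 + g 2) / 2 < g 2 by linarith) l2 0
  obtain ⟨tb, -, htb⟩ := H.visit (gT 6 (by omega)) l5 (show g 6 < (g 6 + g 7) / 2 by linarith) 0
  set a := r ((f^[M])^[ta] (f^[c] x)) with ha
  set b := r ((f^[M])^[tb] (f^[c] x)) with hb
  have hea : e a = (f^[M])^[ta] (f^[c] x) :=
    H.er _ ⟨by linarith [hta.1, g1.1], by linarith [hta.2, g7.2]⟩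
  have heb : e b = (f^[M])^[tb] (f^[c] x) :=
    H.er _ ⟨by linarith [htb.1, g1.1], by linarith [htb.2, g7.2]⟩
  have hlow : ∀ t₀ N, ∃ n, N ≤ n ∧ r (f^[M * n] ((f^[M])^[t₀] (f^[c] x))) ≤ a := by
    intro t₀ N
    obtain ⟨t, ht, h⟩ := H.visit (gT 1 (by omega)) (show g 1 - 1 < g 1 by linarith)
      (show g 1 < (g 1 + g 2) / 2 by linarith) (N + t₀)
    refine ⟨t - t₀, by omega, ?_⟩
    rw [Function.iterate_mul, ← Function.iterate_add_apply, Nat.sub_add_cancel (by omega)]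
    linarith [h.2, hta.1]
  have hhigh : ∀ t₀ N, ∃ n, N ≤ n ∧ b ≤ r (f^[M * n] ((f^[M])^[t₀] (f^[c] x))) := by
    intro t₀ N
    obtain ⟨t, ht, h⟩ := H.visit (gT 7 (by omega)) (show (g 6 + g 7) / 2 < g 7 by linarith)
      (show g 7 < g 7 + 1 by linarith) (N + t₀)
    refine ⟨t - t₀, by omega, ?_⟩
    rw [Function.iterate_mul, ← Function.iterate_add_apply, Nat.sub_add_cancel (by omega)]
    linarith [h.1, htb.2]
  have key : ∀ u, f^[M] u = u → (∀ k < M, r (f^[k] u) ∈ P) →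
      ∀ n, u ∉ f^[n] '' (e '' Icc (g 3) (g 5)) := by
    rintro u hu huP n ⟨_, ⟨v, hv, rfl⟩, hvu⟩
    set z := f^[M * n - n] u with hz
    have hnM : n ≤ M * n := Nat.le_mul_of_pos_left n hM
    have hvz : f^[M * n] (e v) = z := by
      rw [hz, ← hvu, ← Function.iterate_add_apply, Nat.sub_add_cancel hnM]
    have hzf : f^[M] z = z := by
      rw [hz, ← Function.iterate_add_apply, add_comm, Function.iterate_add_apply, hu]
    have hzP : r z ∈ P := by
      have : f^[M * n - n] u = f^[(M * n - n) % M] u :=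
        (Function.IsPeriodicPt.iterate_mod_apply hu _).symm
      rw [hz, this]
      exact huP _ (Nat.mod_lt _ hM)
    have hv1 := hv.1
    have hv2 := hv.2
    rcases lt_or_ge (r z) (g 7) with h | h
    · have h' := hP' _ hzP h
      refine H.phase2L hf h0 hM hzf (a := a) (v := v) (b := b) (by linarith [hta.1, g1.1])
        (by linarith [hta.2]) (by linarith [htb.1]) (by linarith [htb.2, g7.2]) n hvz
        (by linarith [hta.1]) ?_ ?_
      · rw [heb]; exact hhigh tb
      · rw [hea]; exact hhigh ta
    · refine H.phase2R hf h0 hM hzf (a := a) (v := v) (b := b) (by linarith [hta.1, g1.1])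
        (by linarith [hta.2]) (by linarith [htb.1]) (by linarith [htb.2, g7.2]) n hvz
        (by linarith [htb.2]) ?_ ?_
      · rw [hea]; exact hlow ta
      · rw [heb]; exact hlow tb
  refine ⟨g 3, g 5, ?_, by linarith, ?_, ⟨g 4, ⟨(gT 4 (by omega)).1, ?_⟩, l3, l4⟩, fun n => ⟨?_, ?_⟩⟩
  · exact (hg 3 (by omega)).1.2.1
  · exact (hg 5 (by omega)).1.2.2
  · exact omega_class_subset hM c (gT 4 (by omega)).2
  · exact key _ fp (fun k hk => Finset.mem_union_left _
      (Finset.mem_image.2 ⟨k, Finset.mem_range.2 hk, rfl⟩)) n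
  · exact key _ fq (fun k hk => Finset.mem_union_right _
      (Finset.mem_image.2 ⟨k, Finset.mem_range.2 hk, rfl⟩)) n

theorem FreeArc.main {X : Type*} [TopologicalSpace X] [CompactSpace X] [T2Space X]
    {e : ℝ → X} {r : X → ℝ}
    (H : FreeArc e r) {f : X → X} (hf : Continuous f) (h0 : topEntropy f = 0) {x : X}
    {α β : ℝ} (hα : 0 ≤ α) (hβ : β ≤ 1) (hT : (arcPar f x e ∩ Ioo α β).Infinite) :
    ∃ p a b q, α < p ∧ p < a ∧ a < b ∧ b < q ∧ q < β ∧ (∃ τ ∈ arcPar f x e, τ ∈ Ioo a b) ∧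
      ∀ n, e p ∉ f^[n] '' (e '' Icc a b) ∧ e q ∉ f^[n] '' (e '' Icc a b) := by
  obtain ⟨p, q, h1, -, h2, ⟨M, hM, fp, fq⟩, hinf⟩ := H.main1 hf h0 hα hβ hT
  obtain ⟨a, b, h3, h4, h5, h6, h7⟩ := H.main2 hf h0 hM fp fq hinf
  exact ⟨p, a, b, q, h1, h3, h4, h5, h2, h6, h7⟩

theorem periodic_component {X : Type*} [TopologicalSpace X] {f : X → X} (hf : Continuous f)
    {G : Set X} (hG : MapsTo f G G) {y : X} {k : ℕ} (hk : 0 < k) {u : X}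
    (hu : u ∈ connectedComponentIn G y) (hku : f^[k] u ∈ connectedComponentIn G y) :
    ∃ s, 1 ≤ s ∧ MapsTo f^[s] (connectedComponentIn G y) (connectedComponentIn G y) ∧
      ∀ i j, i < j → j < s →
        Disjoint (f^[i] '' connectedComponentIn G y) (f^[j] '' connectedComponentIn G y) := by
  classical
  set Q := connectedComponentIn G y with hQ
  have hex : ∃ k, 0 < k ∧ ∃ u ∈ Q, f^[k] u ∈ Q := ⟨k, hk, u, hu, hku⟩
  have hmin := fun m => Nat.find_min hex (m := m)
  obtain ⟨hs, v, hv, hsv⟩ := Nat.find_spec hex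
  set s := Nat.find hex with hsdef
  refine ⟨s, hs, ?_, ?_⟩
  · have h1 : IsPreconnected (f^[s] '' Q) :=
      isPreconnected_connectedComponentIn.image _ (hf.iterate s).continuousOn
    have h2 : f^[s] '' Q ⊆ G := by
      rintro _ ⟨w, hw, rfl⟩
      exact hG.iterate s (connectedComponentIn_subset _ _ hw)
    have h3 := h1.subset_connectedComponentIn ⟨v, hv, rfl⟩ h2
    rw [← connectedComponentIn_eq hsv] at h3
    exact mapsTo_iff_image_subset.2 h3
  · intro i j hij hjs
    rw [Set.disjoint_left]
    rintro _ ⟨a, ha, rfl⟩ ⟨b, hb, hab⟩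
    have h2 : f^[s] b ∈ Q := by
      have h1 : IsPreconnected (f^[s] '' Q) :=
        isPreconnected_connectedComponentIn.image _ (hf.iterate s).continuousOn
      have h2 : f^[s] '' Q ⊆ G := by
        rintro _ ⟨w, hw, rfl⟩
        exact hG.iterate s (connectedComponentIn_subset _ _ hw)
      have h3 := h1.subset_connectedComponentIn ⟨v, hv, rfl⟩ h2
      rw [← connectedComponentIn_eq hsv] at h3
      exact h3 ⟨b, hb, rfl⟩
    refine hmin (s - j + i) (by omega) ⟨by omega, a, ha, ?_⟩
    rw [Function.iterate_add_apply, ← hab, ← Function.iterate_add_apply,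
      Nat.sub_add_cancel hjs.le]
    exact h2

theorem FreeArc.comp_data {X : Type*} [TopologicalSpace X] {e : ℝ → X} {r : X → ℝ}
    (H : FreeArc e r) {f : X → X} (hf : Continuous f) {x : X} {p a b q : ℝ}
    (hp : 0 < p) (hpa : p < a) (hab : a < b) (hbq : b < q) (hq : q < 1)
    (hτ : ∃ τ ∈ arcPar f x e, τ ∈ Ioo a b)
    (hn : ∀ n, e p ∉ f^[n] '' (e '' Icc a b) ∧ e q ∉ f^[n] '' (e '' Icc a b)) :
    ∃ (Q : Set X) (s t : ℕ), IsPreconnected Q ∧ e '' Icc a b ⊆ Q ∧ Q ⊆ e '' Ioo p q ∧ 1 ≤ s ∧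
      MapsTo f^[s] Q Q ∧ (∀ i j, i < j → j < s → Disjoint (f^[i] '' Q) (f^[j] '' Q)) ∧
      f^[t] x ∈ Q := by
  set G := ⋃ n, f^[n] '' (e '' Icc a b) with hG
  have hGf : MapsTo f G G := by
    intro y hy
    obtain ⟨n, z, hz, rfl⟩ := mem_iUnion.1 hy
    exact mem_iUnion.2 ⟨n + 1, z, hz, Function.iterate_succ_apply' f n z⟩
  have hJG : e '' Icc a b ⊆ G := fun y hy => mem_iUnion.2 ⟨0, y, hy, rfl⟩
  have heaJ : e a ∈ e '' Icc a b := ⟨a, left_mem_Icc.2 hab.le, rfl⟩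
  set Q := connectedComponentIn G (e a) with hQ
  have hJQ : e '' Icc a b ⊆ Q :=
    (H.isPreconnected_image a b).subset_connectedComponentIn heaJ hJG
  have hQc : IsPreconnected Q := isPreconnected_connectedComponentIn
  have hpG : e p ∉ G := fun h => by
    obtain ⟨n, h⟩ := mem_iUnion.1 h
    exact (hn n).1 h
  have hqG : e q ∉ G := fun h => by
    obtain ⟨n, h⟩ := mem_iUnion.1 h
    exact (hn n).2 h
  have hra : r (e a) = a := H.re a ⟨by linarith, by linarith⟩
  have hQpq : Q ⊆ e '' Ioo p q := by
    intro y hy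
    have h1 : p < r y := by
      by_contra hcon
      exact hpG (connectedComponentIn_subset _ _ (H.cover hQc hy (hJQ heaJ)
        ⟨hp, by linarith⟩ (not_lt.1 hcon) (by rw [hra]; exact hpa.le)))
    have h2 : r y < q := by
      by_contra hcon
      exact hqG (connectedComponentIn_subset _ _ (H.cover hQc (hJQ heaJ) hy
        ⟨by linarith, hq⟩ (by rw [hra]; linarith) (not_lt.1 hcon)))
    exact ⟨r y, ⟨h1, h2⟩, H.er y ⟨by linarith, by linarith⟩⟩
  obtain ⟨τ, hτ, hτab⟩ := hτ
  have hv : ∀ N, ∃ t, N ≤ t ∧ f^[t] x ∈ Q := by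
    intro N
    obtain ⟨t, ht, h⟩ := H.visit hτ hτab.1 hτab.2 N
    exact ⟨t, ht, hJQ ⟨_, Ioo_subset_Icc_self h, H.er _ ⟨by linarith [h.1], by linarith [h.2]⟩⟩⟩
  obtain ⟨t, -, ht⟩ := hv 0
  obtain ⟨t', htt, ht'⟩ := hv (t + 1)
  obtain ⟨s, h1, h2, h3⟩ := periodic_component hf hGf (k := t' - t) (by omega) ht
    (by rw [← Function.iterate_add_apply, Nat.sub_add_cancel (by omega)]; exact ht')
  exact ⟨Q, s, t, hQc, hJQ, hQpq, h1, h2, h3, ht⟩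

theorem omega_trap {X : Type*} [TopologicalSpace X] {f : X → X} {x : X} {Q : Set X} {t : ℕ}
    (hQ : MapsTo f Q Q) (ht : f^[t] x ∈ Q) : omegaLimitSet f x ⊆ closure Q := by
  intro y hy
  refine closure_mono ?_ (mem_iInter.1 hy t)
  rintro _ ⟨k, hk, rfl⟩
  obtain ⟨m, rfl⟩ := Nat.exists_eq_add_of_le (mem_Ici.1 hk)
  show f^[t + m] x ∈ Q
  rw [add_comm, Function.iterate_add_apply]
  exact hQ.iterate m ht

theorem arcOrbit_mapsTo {X : Type*} {f : X → X} {I : Set X} {s : ℕ} (hs : 1 ≤ s)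
    (h : MapsTo f^[s] I I) : MapsTo f (arcOrbit f I s) (arcOrbit f I s) := by
  intro y hy
  simp only [arcOrbit, mem_iUnion, Finset.mem_range] at hy ⊢
  obtain ⟨i, hi, z, hz, rfl⟩ := hy
  rcases Nat.lt_or_ge (i + 1) s with h1 | h1
  · exact ⟨i + 1, h1, z, hz, Function.iterate_succ_apply' f i z⟩
  · refine ⟨0, hs, f^[s] z, h hz, ?_⟩
    have : s = i + 1 := by omega
    rw [this, Function.iterate_succ_apply']; rfl

theorem arcOrbit_closed {X : Type*} [TopologicalSpace X] [T2Space X] {f : X → X}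
    (hf : Continuous f) {I : Set X} (hI : IsCompact I) (s : ℕ) : IsClosed (arcOrbit f I s) := by
  refine IsCompact.isClosed ?_
  exact (Finset.range s).isCompact_biUnion fun i _ => hI.image (hf.iterate i)

theorem subset_arcOrbit {X : Type*} {f : X → X} {I : Set X} {s : ℕ} (hs : 1 ≤ s) :
    I ⊆ arcOrbit f I s := fun y hy => by
  simp only [arcOrbit, mem_iUnion, Finset.mem_range]
  exact ⟨0, hs, y, hy, rfl⟩

theorem FreeArc.isArc_image {X : Type*} [TopologicalSpace X] {e : ℝ → X} {r : X → ℝ}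
    (H : FreeArc e r) {a b : ℝ} (ha : 0 ≤ a) (hab : a < b) (hb : b ≤ 1) :
    IsArc (e '' Icc a b) := by
  have hre : ∀ t ∈ Icc a b, r (e t) = t := fun t ht => H.re t ⟨ha.trans ht.1, ht.2.trans hb⟩
  refine ⟨Homeomorph.trans
    { toFun := fun y => ⟨r y.1, by
        obtain ⟨t, ht, hy⟩ := y.2
        rw [← hy, hre t ht]; exact ht⟩
      invFun := fun t => ⟨e t.1, t.1, t.2, rfl⟩
      left_inv := ?_
      right_inv := ?_
      continuous_toFun := ?_
      continuous_invFun := ?_ } (iccHomeoI a b hab)⟩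
  · rintro ⟨_, t, ht, rfl⟩
    simp [hre t ht]
  · rintro ⟨t, ht⟩
    simp [hre t ht]
  · exact (H.cr.comp continuous_subtype_val).subtype_mk _
  · exact (H.ce.comp continuous_subtype_val).subtype_mk _

theorem FreeArc.final {X : Type*} [TopologicalSpace X] [CompactSpace X] [T2Space X]
    {e : ℝ → X} {r : X → ℝ}
    (H : FreeArc e r) {f : X → X} (hf : Continuous f) (h0 : topEntropy f = 0) {x : X}
    (hω : (omegaLimitSet f x).Infinite) (hT : (arcPar f x e).Infinite) :
    ∃ (I : Set X) (s : ℕ), IsPeriodicArc f I s ∧ omegaLimitSet f x ⊆ arcOrbit f I s := by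
  have hT' : (arcPar f x e ∩ Ioo 0 1).Infinite := by
    rwa [inter_eq_left.2 fun τ hτ => hτ.1]
  obtain ⟨p, a, b, q, hp, hpa, hab, hbq, hq, hτ, hn⟩ := H.main hf h0 le_rfl le_rfl hT'
  obtain ⟨Q, s, t, Qc, hJQ, hQ, hs, Qs, Qd, ht⟩ := H.comp_data hf hp hpa hab hbq hq hτ hn
  have hQr : ∀ y ∈ Q, p < r y ∧ r y < q ∧ e (r y) = y := by
    intro y hy
    obtain ⟨τ, hτ, rfl⟩ := hQ hy
    rw [H.re τ ⟨by linarith [hτ.1], by linarith [hτ.2]⟩]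
    exact ⟨hτ.1, hτ.2, rfl⟩
  set R := r '' Q with hR
  have Rne : R.Nonempty := ⟨_, _, ht, rfl⟩
  have Rp : ∀ v ∈ R, p ≤ v := by
    rintro _ ⟨y, hy, rfl⟩; exact (hQr y hy).1.le
  have Rq : ∀ v ∈ R, v ≤ q := by
    rintro _ ⟨y, hy, rfl⟩; exact (hQr y hy).2.1.le
  have Rbb : BddBelow R := ⟨p, Rp⟩
  have Rba : BddAbove R := ⟨q, Rq⟩
  have Rc : IsPreconnected R := Qc.image _ H.cr.continuousOn
  set α := sInf R with hα
  set β := sSup R with hβ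
  have hpα : p ≤ α := le_csInf Rne Rp
  have hβq : β ≤ q := csSup_le Rne Rq
  have hsub : e '' Ioo α β ⊆ Q := by
    rintro _ ⟨v, hv, rfl⟩
    obtain ⟨y, hy, rfl⟩ := (show IsConnected R from ⟨Rne, Rc⟩).Ioo_csInf_csSup_subset Rbb Rba hv
    rw [(hQr y hy).2.2]; exact hy
  have hT2 : (arcPar f x e ∩ Ioo α β).Infinite := by
    intro hfin
    refine omega_class_infinite hf (x := x) hs hω t
      (((hfin.union ((finite_singleton α).union (finite_singleton β))).image e).subset ?_)
    intro y hy
    have h1 : y ∈ closure Q := omega_trap (t := 0) Qs ht hy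
    have h2 : r y ∈ Icc α β := by
      have : closure Q ⊆ r ⁻¹' Icc α β := closure_minimal
        (fun z hz => ⟨csInf_le Rbb ⟨z, hz, rfl⟩, le_csSup Rba ⟨z, hz, rfl⟩⟩)
        (isClosed_Icc.preimage H.cr)
      exact this h1
    have h01 : r y ∈ Ioo (0:ℝ) 1 := ⟨by linarith [h2.1], by linarith [h2.2]⟩
    have h3 := H.er y h01
    refine ⟨r y, ?_, h3⟩
    rcases eq_or_lt_of_le h2.1 with h | h
    · exact Or.inr (Or.inl h.symm)
    rcases eq_or_lt_of_le h2.2 with h' | h'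
    · exact Or.inr (Or.inr h')
    refine Or.inl ⟨⟨h01, ?_⟩, h, h'⟩
    rw [h3]
    exact omega_class_subset hs t hy
  obtain ⟨p', a', b', q', hp', hpa', hab', hbq', hq', hτ', hn'⟩ :=
    H.main hf h0 (by linarith) (by linarith) hT2
  obtain ⟨Q', s', t', Qc', hJQ', hQ', hs', Qs', Qd', ht'⟩ :=
    H.comp_data hf (by linarith) hpa' hab' hbq' (by linarith) hτ' hn'
  have hCQ : closure Q' ⊆ Q := by
    have h1 : closure Q' ⊆ e '' Icc p' q' := closure_minimal
      (hQ'.trans (image_mono Ioo_subset_Icc_self)) (H.isClosed_image _ _)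
    exact h1.trans ((image_mono (Icc_subset_Ioo hp' hq')).trans hsub)
  set C := closure Q' with hC
  have hCc : IsCompact C := isClosed_closure.isCompact
  have hCs : MapsTo f^[s'] C C := Qs'.closure (hf.iterate s')
  set D := arcOrbit f C s' with hD
  have hDf : MapsTo f D D := arcOrbit_mapsTo hs' hCs
  have hDc : IsClosed D := arcOrbit_closed hf hCc s'
  set J := e '' Icc a' b' with hJ
  have hJD : J ⊆ D := hJQ'.trans (subset_closure.trans (subset_arcOrbit hs'))
  have heJ : e a' ∈ J := ⟨a', left_mem_Icc.2 hab'.le, rfl⟩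
  have hebJ : e b' ∈ J := ⟨b', right_mem_Icc.2 hab'.le, rfl⟩
  set I := connectedComponentIn D (e a') with hI
  have hJI : J ⊆ I := (H.isPreconnected_image a' b').subset_connectedComponentIn heJ hJD
  have hIp : IsPreconnected I := isPreconnected_connectedComponentIn
  have hIc : IsClosed I := by
    have h1 : closure I ⊆ D := closure_minimal (connectedComponentIn_subset _ _) hDc
    have h2 := hIp.closure.subset_connectedComponentIn (subset_closure (hJI heJ)) h1
    exact isClosed_of_closure_subset h2
  have hIQ : I ⊆ Q := by
    set D1 := ⋃ i ∈ (Finset.range s').filter (fun i => s ∣ i), f^[i] '' C with hD1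
    set D2 := ⋃ i ∈ (Finset.range s').filter (fun i => ¬ s ∣ i), f^[i] '' C with hD2
    have c1 : IsClosed D1 :=
      (Finset.isCompact_biUnion _ fun i _ => hCc.image (hf.iterate i)).isClosed
    have c2 : IsClosed D2 :=
      (Finset.isCompact_biUnion _ fun i _ => hCc.image (hf.iterate i)).isClosed
    have hD1Q : D1 ⊆ Q := by
      intro y hy
      simp only [hD1, mem_iUnion, Finset.mem_filter] at hy
      obtain ⟨i, ⟨-, k, rfl⟩, z, hz, rfl⟩ := hy
      rw [Function.iterate_mul]
      exact Qs.iterate k (hCQ hz)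
    have hD2Q : Disjoint Q D2 := by
      rw [Set.disjoint_left]
      intro y hyQ hy
      simp only [hD2, mem_iUnion, Finset.mem_filter] at hy
      obtain ⟨i, ⟨-, hi⟩, z, hz, rfl⟩ := hy
      have hpos : 0 < i % s := Nat.pos_of_ne_zero fun h => hi (Nat.dvd_of_mod_eq_zero h)
      have := Qd 0 (i % s) hpos (Nat.mod_lt _ hs)
      refine Set.disjoint_left.1 this (mem_image_of_mem (f^[0]) hyQ) ⟨f^[s * (i / s)] z, ?_, ?_⟩
      · rw [Function.iterate_mul]
        exact Qs.iterate _ (hCQ hz)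
      · rw [← Function.iterate_add_apply, Nat.mod_add_div]; rfl
    have hID : I ⊆ D1 ∪ D2 := by
      intro y hy
      have := connectedComponentIn_subset _ _ hy
      simp only [hD, arcOrbit, mem_iUnion, Finset.mem_range] at this
      obtain ⟨i, hi, h⟩ := this
      by_cases hd : s ∣ i
      · exact Or.inl (mem_biUnion (Finset.mem_coe.2 (Finset.mem_filter.2
          ⟨Finset.mem_range.2 hi, hd⟩)) h)
      · exact Or.inr (mem_biUnion (Finset.mem_coe.2 (Finset.mem_filter.2
          ⟨Finset.mem_range.2 hi, hd⟩)) h)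
    rcases (isPreconnected_iff_subset_of_fully_disjoint_closed hIc).1 hIp D1 D2 c1 c2 hID
      (hD2Q.mono_left hD1Q) with h | h
    · exact h.trans hD1Q
    · exact absurd (h (hJI heJ)) (Set.disjoint_left.1 hD2Q (hCQ (subset_closure (hJQ' heJ))))
  have hv : ∀ N, ∃ t, N ≤ t ∧ f^[t] x ∈ I := by
    intro N
    obtain ⟨τ, hτ, hτab⟩ := hτ'
    obtain ⟨t, ht, h⟩ := H.visit hτ hτab.1 hτab.2 N
    exact ⟨t, ht, hJI ⟨_, Ioo_subset_Icc_self h, H.er _ ⟨by linarith [h.1], by linarith [h.2]⟩⟩⟩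
  obtain ⟨t₁, -, ht₁⟩ := hv 0
  obtain ⟨t₂, htt, ht₂⟩ := hv (t₁ + 1)
  obtain ⟨S, hS, hS1, hS2⟩ := periodic_component hf hDf (k := t₂ - t₁) (by omega) ht₁
    (by rw [← Function.iterate_add_apply, Nat.sub_add_cancel (by omega)]; exact ht₂)
  have hIarc : IsArc I := by
    have k1 : IsConnected (r '' I) := ⟨⟨_, _, ht₁, rfl⟩, hIp.image _ H.cr.continuousOn⟩
    have k2 : IsCompact (r '' I) := hIc.isCompact.image H.cr
    obtain ⟨u, v, huv⟩ : ∃ u v, r '' I = Icc u v := ⟨_, _, eq_Icc_of_connected_compact k1 k2⟩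
    have k3 : I = e '' Icc u v := by
      rw [← huv, image_image]
      ext y
      constructor
      · intro hy; exact ⟨y, hy, (hQr y (hIQ hy)).2.2⟩
      · rintro ⟨z, hz, rfl⟩; show e (r z) ∈ I; rw [(hQr z (hIQ hz)).2.2]; exact hz
    have k4 : a' ∈ Icc u v := by
      rw [← huv]; exact ⟨e a', hJI heJ, H.re a' ⟨by linarith, by linarith⟩⟩
    have k5 : b' ∈ Icc u v := by
      rw [← huv]; exact ⟨e b', hJI hebJ, H.re b' ⟨by linarith, by linarith⟩⟩
    have k6 : u ≤ v := k4.1.trans k4.2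
    have k7 : u ∈ r '' I := by rw [huv]; exact left_mem_Icc.2 k6
    have k8 : v ∈ r '' I := by rw [huv]; exact right_mem_Icc.2 k6
    rw [k3]
    refine H.isArc_image ?_ (by linarith [k4.1, k5.2]) ?_
    · obtain ⟨y, hy, rfl⟩ := k7
      linarith [(hQr y (hIQ hy)).1]
    · obtain ⟨y, hy, rfl⟩ := k8
      linarith [(hQr y (hIQ hy)).2.1]
  refine ⟨I, S, ⟨hIarc, hS, hS1, hS2⟩, ?_⟩
  have := omega_trap (arcOrbit_mapsTo hS hS1) (subset_arcOrbit hS ht₁)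
  rwa [(arcOrbit_closed hf hIc.isCompact S).closure_eq] at this

/-- parametrisation data of an arc -/
structure ArcParam {X : Type*} [TopologicalSpace X] (A : Set X) (e : ℝ → X) (ρ : X → ℝ) :
    Prop where
  ce : Continuous e
  cr : ContinuousOn ρ A
  mem : ∀ t, e t ∈ A
  re : ∀ t ∈ Icc (0:ℝ) 1, ρ (e t) = t
  rm : ∀ y ∈ A, ρ y ∈ Icc (0:ℝ) 1
  er : ∀ y ∈ A, e (ρ y) = y

theorem exists_arcParam {X : Type*} [TopologicalSpace X] {A : Set X} (hA : IsArc A) :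
    ∃ e ρ, ArcParam A e ρ := by
  classical
  obtain ⟨φ⟩ := hA
  have key : ∀ (y : X) (h : y ∈ A), (if h : y ∈ A then (φ ⟨y, h⟩ : ℝ) else 0) = φ ⟨y, h⟩ :=
    fun y h => dif_pos h
  refine ⟨fun t => (φ.symm (projIcc 0 1 zero_le_one t) : X),
    fun y => if h : y ∈ A then (φ ⟨y, h⟩ : ℝ) else 0, ?_, ?_, ?_, ?_, ?_, ?_⟩
  · exact continuous_subtype_val.comp (φ.symm.continuous.comp continuous_projIcc)
  · rw [continuousOn_iff_continuous_domRestrict]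
    have : A.domRestrict (fun y => if h : y ∈ A then (φ ⟨y, h⟩ : ℝ) else 0) =
        fun y => (φ y : ℝ) := by
      funext y
      exact key y.1 y.2
    rw [this]
    exact continuous_subtype_val.comp φ.continuous
  · intro t; exact Subtype.mem _
  · intro t ht
    beta_reduce
    rw [key _ (Subtype.mem _)]
    simp [projIcc_of_mem zero_le_one ht]
  · intro y hy
    beta_reduce
    rw [key y hy]; exact Subtype.mem _
  · intro y hy
    beta_reduce
    rw [key y hy]; simp

theorem ArcParam.inj {X : Type*} [TopologicalSpace X] {A : Set X} {e : ℝ → X} {ρ : X → ℝ}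
    (P : ArcParam A e ρ) {s t : ℝ} (hs : s ∈ Icc (0:ℝ) 1) (ht : t ∈ Icc (0:ℝ) 1)
    (h : e s = e t) : s = t := by
  rw [← P.re s hs, h, P.re t ht]

theorem ArcParam.endpoint {X : Type*} [TopologicalSpace X] [T2Space X] {A : Set X} {e : ℝ → X}
    {ρ : X → ℝ} (P : ArcParam A e ρ) {p : X} (hp : IsArcEndpoint A p) : p = e 0 ∨ p = e 1 := by
  by_contra hcon
  push Not at hcon
  obtain ⟨hpA, hpc⟩ := hp
  set t := ρ p with ht
  have htp : e t = p := P.er p hpA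
  have ht01 := P.rm p hpA
  have h0 : 0 < t := lt_of_le_of_ne ht01.1 fun h => hcon.1 (by rw [← htp, ← h])
  have h1 : t < 1 := lt_of_le_of_ne ht01.2 fun h => hcon.2 (by rw [← htp, h])
  have c1 : IsClosed (e '' Icc 0 t) := (isCompact_Icc.image P.ce).isClosed
  have c2 : IsClosed (e '' Icc t 1) := (isCompact_Icc.image P.ce).isClosed
  obtain ⟨y, hy, ⟨u, hu, rfl⟩, ⟨v, hv, huv⟩⟩ := isPreconnected_closed_iff.1 hpc.isPreconnected
    (e '' Icc 0 t) (e '' Icc t 1) c1 c2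
    (by
      rintro y ⟨hy, -⟩
      have h := P.rm y hy
      rcases le_total (ρ y) t with h' | h'
      · exact Or.inl ⟨ρ y, ⟨h.1, h'⟩, P.er y hy⟩
      · exact Or.inr ⟨ρ y, ⟨h', h.2⟩, P.er y hy⟩)
    ⟨e 0, ⟨P.mem 0, fun h => hcon.1 h.symm⟩, 0, ⟨le_rfl, h0.le⟩, rfl⟩
    ⟨e 1, ⟨P.mem 1, fun h => hcon.2 h.symm⟩, 1, ⟨h1.le, le_rfl⟩, rfl⟩
  have h := P.inj ⟨by linarith [hv.1], hv.2⟩ ⟨hu.1, by linarith [hu.2]⟩ huv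
  have : u = t := by linarith [hv.1, hu.2]
  exact hy.2 (by rw [this, htp]; rfl)

/-- two points joined by a (possibly degenerate) injective path in `Z` -/
def ArcJoined {X : Type*} [TopologicalSpace X] (Z : Set X) (p q : X) : Prop :=
  ∃ (γ : ℝ → X) (a b : ℝ), a ≤ b ∧ Continuous γ ∧ InjOn γ (Icc a b) ∧ MapsTo γ (Icc a b) Z ∧
    γ a = p ∧ γ b = q

theorem ArcJoined.trans {X : Type*} [TopologicalSpace X] [T2Space X] {Z : Set X} {p m q : X}
    (h1 : ArcJoined Z p m) (h2 : ArcJoined Z m q) : ArcJoined Z p q := by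
  obtain ⟨γ, a, b, hab, cγ, iγ, mγ, rfl, γb⟩ := h1
  obtain ⟨δ, c, d, hcd, cδ, iδ, mδ, δc, rfl⟩ := h2
  have hcl : IsClosed (δ '' Icc c d) := (isCompact_Icc.image cδ).isClosed
  have hK : IsCompact (Icc a b ∩ γ ⁻¹' (δ '' Icc c d)) :=
    isCompact_Icc.inter_right (hcl.preimage cγ)
  obtain ⟨T, hT⟩ := hK.exists_isLeast ⟨b, right_mem_Icc.2 hab, by
    show γ b ∈ δ '' Icc c d
    rw [γb, ← δc]; exact ⟨c, left_mem_Icc.2 hcd, rfl⟩⟩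
  obtain ⟨⟨hTab, u, hu, huT⟩, hTmin⟩ := hT
  have hmin : ∀ t ∈ Icc a b, γ t ∈ δ '' Icc c d → T ≤ t := fun t h h' => hTmin ⟨h, h'⟩
  refine ⟨fun t => if t ≤ T then γ t else δ (u + (t - T)), a, T + (d - u),
    by linarith [hTab.1, hu.2], ?_, ?_, ?_, ?_, ?_⟩
  · refine Continuous.if_le cγ (cδ.comp (by fun_prop)) continuous_id continuous_const ?_
    intro t ht
    simp [ht, huT]
  · intro s hs t ht hst
    beta_reduce at hst
    have cross : ∀ s t, s ∈ Icc a (T + (d - u)) → t ∈ Icc a (T + (d - u)) → s ≤ T → T < t →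
        γ s = δ (u + (t - T)) → False := by
      intro s t hs ht h h' hst
      have e1 : u + (t - T) ∈ Icc c d := ⟨by linarith [hu.1], by linarith [ht.2]⟩
      have e2 := hmin s ⟨hs.1, by linarith [hTab.2]⟩ (by rw [hst]; exact ⟨_, e1, rfl⟩)
      have e3 : s = T := le_antisymm h e2
      rw [e3, ← huT] at hst
      have := iδ hu e1 hst
      linarith
    rcases le_or_gt s T with h | h <;> rcases le_or_gt t T with h' | h'
    · rw [if_pos h, if_pos h'] at hst
      exact iγ ⟨hs.1, by linarith [hTab.2]⟩ ⟨ht.1, by linarith [hTab.2]⟩ hst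
    · rw [if_pos h, if_neg (not_le.2 h')] at hst
      exact (cross s t hs ht h h' hst).elim
    · rw [if_neg (not_le.2 h), if_pos h'] at hst
      exact (cross t s ht hs h' h hst.symm).elim
    · rw [if_neg (not_le.2 h), if_neg (not_le.2 h')] at hst
      have := iδ ⟨by linarith [hu.1], by linarith [hs.2]⟩ ⟨by linarith [hu.1], by linarith [ht.2]⟩ hst
      linarith
  · intro t ht
    beta_reduce
    split_ifs with h
    · exact mγ ⟨ht.1, by linarith [hTab.2]⟩
    · exact mδ ⟨by linarith [hu.1, not_le.1 h], by linarith [ht.2]⟩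
  · simp [hTab.1]
  · beta_reduce
    split_ifs with h
    · have : u = d := by linarith [hu.2]
      rw [← this, huT]; congr 1; ring
    · congr 1; ring

theorem ArcParam.joined {X : Type*} [TopologicalSpace X] {A Z : Set X} {e : ℝ → X}
    {ρ : X → ℝ} (P : ArcParam A e ρ) (hAZ : A ⊆ Z) {p q : X} (hp : p ∈ A) (hq : q ∈ A) :
    ArcJoined Z p q := by
  have h1 := P.rm p hp
  have h2 := P.rm q hq
  rcases le_total (ρ p) (ρ q) with h | h
  · refine ⟨e, ρ p, ρ q, h, P.ce, ?_, fun t _ => hAZ (P.mem t), P.er p hp, P.er q hq⟩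
    intro s hs t ht hst
    exact P.inj ⟨h1.1.trans hs.1, hs.2.trans h2.2⟩ ⟨h1.1.trans ht.1, ht.2.trans h2.2⟩ hst
  · refine ⟨fun t => e (- t), - ρ p, - ρ q, by linarith, P.ce.comp continuous_neg, ?_,
      fun t _ => hAZ (P.mem _), by simp [P.er p hp], by simp [P.er q hq]⟩
    intro s hs t ht hst
    have := P.inj (s := -s) (t := -t) ⟨by linarith [h2.1, hs.2], by linarith [h1.2, hs.1]⟩
      ⟨by linarith [h2.1, ht.2], by linarith [h1.2, ht.1]⟩ hst
    linarith

theorem simple_closed_of_loop {X : Type*} [TopologicalSpace X] [T2Space X] {η : ℝ → X} {a b : ℝ}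
    (hab : a < b) (hc : Continuous η) (hi : InjOn η (Ico a b)) (he : η a = η b) :
    ∃ S : Set X, IsSimpleClosedCurve S := by
  obtain ⟨T, rfl⟩ : ∃ T, b = a + T := ⟨b - a, by ring⟩
  have hT : 0 < T := by linarith
  have : Fact (0 < T) := ⟨hT⟩
  set g : AddCircle T → X := AddCircle.liftIco T a η with hg
  have gc : Continuous g := AddCircle.liftIco_continuous he hc.continuousOn
  have gi : Injective g := by
    intro x y hxy
    have hx : x ∈ ((↑) : ℝ → AddCircle T) '' Ico a (a + T) := by
      rw [AddCircle.coe_image_Ico_eq]; trivial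
    have hy : y ∈ ((↑) : ℝ → AddCircle T) '' Ico a (a + T) := by
      rw [AddCircle.coe_image_Ico_eq]; trivial
    obtain ⟨s, hs, rfl⟩ := hx
    obtain ⟨t, ht, rfl⟩ := hy
    rw [hg, AddCircle.liftIco_coe_apply hs, AddCircle.liftIco_coe_apply ht] at hxy
    rw [hi hs ht hxy]
  have ge := (gc.isClosedEmbedding gi).isEmbedding
  let ψ : Circle ≃ₜ Metric.sphere (0 : ℂ) 1 :=
    { toFun := fun z => ⟨z.1, z.2⟩
      invFun := fun z => ⟨z.1, z.2⟩
      left_inv := fun _ => rfl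
      right_inv := fun _ => rfl
      continuous_toFun := continuous_induced_rng.2 continuous_subtype_val
      continuous_invFun := continuous_induced_rng.2 continuous_subtype_val }
  exact ⟨range g, ⟨ge.toHomeomorph.symm.trans ((AddCircle.homeomorphCircle hT.ne').trans ψ)⟩⟩

theorem exists_freeArc {X : Type*} [MetricSpace X] (hX : IsTree X) {W : Set X} (hW : W.Infinite) :
    ∃ e r, FreeArc e r ∧ {τ : ℝ | τ ∈ Ioo (0:ℝ) 1 ∧ e τ ∈ W}.Infinite := by
  classical
  obtain ⟨-, -, ⟨𝒜, harc, hcov, hmeet⟩, hcurve⟩ := hX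
  obtain ⟨A, hA, hAW⟩ : ∃ A ∈ 𝒜, (W ∩ A).Infinite := by
    by_contra hcon
    push Not at hcon
    refine hW ((𝒜.finite_toSet.biUnion (t := fun A => W ∩ A) fun A hA => hcon A hA).subset ?_)
    intro y hy
    have : y ∈ ⋃₀ (𝒜 : Set (Set X)) := by rw [hcov]; trivial
    obtain ⟨A, hA, hyA⟩ := this
    exact mem_biUnion hA ⟨hy, hyA⟩
  obtain ⟨e, ρ, P⟩ := exists_arcParam (harc A hA)
  set 𝓑 := 𝒜.erase A with h𝓑
  set Z := ⋃₀ (𝓑 : Set (Set X)) with hZ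
  have hB𝒜 : ∀ B ∈ 𝓑, B ∈ 𝒜 := fun B hB => Finset.mem_of_mem_erase hB
  have hend : ∀ B ∈ 𝓑, ∀ y ∈ B, y ∈ A → y = e 0 ∨ y = e 1 := fun B hB y hy hyA =>
    P.endpoint (hmeet A hA B (hB𝒜 B hB) (Finset.ne_of_mem_erase hB).symm y ⟨hyA, hy⟩).1
  have hBZ : ∀ B ∈ 𝓑, B ⊆ Z := fun B hB => subset_sUnion_of_mem (Finset.mem_coe.2 hB)
  have hBj : ∀ B ∈ 𝓑, ∀ y ∈ B, ∀ z ∈ B, ArcJoined Z y z := by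
    intro B hB y hy z hz
    obtain ⟨e', ρ', P'⟩ := exists_arcParam (harc B (hB𝒜 B hB))
    exact P'.joined (hBZ B hB) hy hz
  have hBc : ∀ B ∈ 𝒜, IsClosed B := by
    intro B hB
    obtain ⟨φ⟩ := harc B hB
    have : CompactSpace B := φ.symm.compactSpace
    exact (isCompact_iff_compactSpace.2 inferInstance).isClosed
  have h01 : e 0 ≠ e 1 := fun h => zero_ne_one
    (P.inj (left_mem_Icc.2 zero_le_one) (right_mem_Icc.2 zero_le_one) h)
  have hnj : ∀ y, (y = e 0 ∨ ArcJoined Z (e 0) y) → (y = e 1 ∨ ArcJoined Z y (e 1)) → False := by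
    intro y hy0 hy1
    have hj : ArcJoined Z (e 0) (e 1) := by
      rcases hy0 with rfl | h
      · rcases hy1 with h' | h'
        · exact (h01 h').elim
        · exact h'
      · rcases hy1 with rfl | h'
        · exact h
        · exact h.trans h'
    obtain ⟨γ, a, b, hab, cγ, iγ, mγ, γa, γb⟩ := hj
    have hab' : a < b := lt_of_le_of_ne hab fun h => h01 (by rw [← γa, ← γb, h])
    have hZA : ∀ s ∈ Icc a b, γ s ∈ A → s = a ∨ s = b := by
      intro s hs h
      obtain ⟨B, hB, hsB⟩ := mγ hs
      rcases hend B (Finset.mem_coe.1 hB) _ hsB h with h' | h'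
      · exact Or.inl (iγ hs (left_mem_Icc.2 hab) (by rw [h', γa]))
      · exact Or.inr (iγ hs (right_mem_Icc.2 hab) (by rw [h', γb]))
    obtain ⟨S, hS⟩ := simple_closed_of_loop
      (η := fun t => if t ≤ b then γ t else e (1 - (t - b))) (a := a) (b := b + 1) (by linarith)
      (by
        refine Continuous.if_le cγ (P.ce.comp (by fun_prop)) continuous_id continuous_const ?_
        intro t ht
        simp [ht, γb])
      (by
        have cross : ∀ s t, s ∈ Ico a (b + 1) → t ∈ Ico a (b + 1) → s ≤ b → b < t →
            γ s = e (1 - (t - b)) → False := by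
          intro s t hs ht h h' hst
          have ht1 : 1 - (t - b) ∈ Icc (0:ℝ) 1 := ⟨by linarith [ht.2], by linarith⟩
          rcases hZA s ⟨hs.1, h⟩ (by rw [hst]; exact P.mem _) with rfl | rfl
          · rw [γa] at hst
            have := P.inj (left_mem_Icc.2 zero_le_one) ht1 hst
            linarith [ht.2]
          · rw [γb] at hst
            have := P.inj (right_mem_Icc.2 zero_le_one) ht1 hst
            linarith
        intro s hs t ht hst
        beta_reduce at hst
        rcases le_or_gt s b with h | h <;> rcases le_or_gt t b with h' | h'
        · rw [if_pos h, if_pos h'] at hst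
          exact iγ ⟨hs.1, h⟩ ⟨ht.1, h'⟩ hst
        · rw [if_pos h, if_neg (not_le.2 h')] at hst
          exact (cross s t hs ht h h' hst).elim
        · rw [if_neg (not_le.2 h), if_pos h'] at hst
          exact (cross t s ht hs h' h hst.symm).elim
        · rw [if_neg (not_le.2 h), if_neg (not_le.2 h')] at hst
          have := P.inj ⟨by linarith [hs.2], by linarith⟩ ⟨by linarith [ht.2], by linarith⟩ hst
          linarith)
      (by
        beta_reduce
        rw [if_pos hab, if_neg (by linarith), γa]
        congr 1; ring)
    exact hcurve S hS
  set 𝓡 := 𝓑.filter (fun B => ∃ y ∈ B, y = e 0 ∨ ArcJoined Z (e 0) y) with h𝓡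
  set 𝓢 := 𝓑.filter (fun B => ¬ ∃ y ∈ B, y = e 0 ∨ ArcJoined Z (e 0) y) with h𝓢
  set Y0 : Set X := {e 0} ∪ ⋃₀ (𝓡 : Set (Set X)) with hY0
  set Y1 : Set X := {e 1} ∪ ⋃₀ (𝓢 : Set (Set X)) with hY1
  have hclosed : ∀ 𝒞 : Finset (Set X), 𝒞 ⊆ 𝓑 → ∀ p : X,
      IsClosed ({p} ∪ ⋃₀ (𝒞 : Set (Set X))) := fun 𝒞 h𝒞 p =>
    isClosed_singleton.union (by
      rw [sUnion_eq_biUnion]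
      exact 𝒞.finite_toSet.isClosed_biUnion fun B hB =>
        hBc B (hB𝒜 B (h𝒞 (Finset.mem_coe.1 hB))))
  have c0 : IsClosed Y0 := hclosed 𝓡 (Finset.filter_subset _ _) _
  have c1 : IsClosed Y1 := hclosed 𝓢 (Finset.filter_subset _ _) _
  have hY0j : ∀ y ∈ Y0, y = e 0 ∨ ArcJoined Z (e 0) y := by
    rintro y (rfl | ⟨B, hB, hyB⟩)
    · exact Or.inl rfl
    · obtain ⟨hB𝓑, z, hz, hz'⟩ := Finset.mem_filter.1 (Finset.mem_coe.1 hB)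
      rcases hz' with rfl | h
      · exact Or.inr (hBj B hB𝓑 _ hz _ hyB)
      · exact Or.inr (h.trans (hBj B hB𝓑 _ hz _ hyB))
  have hdisj : ∀ y ∈ Y0, y ∉ Y1 := by
    rintro y hy (rfl | ⟨B, hB, hyB⟩)
    · exact hnj _ (hY0j _ hy) (Or.inl rfl)
    · obtain ⟨hB𝓑, hz⟩ := Finset.mem_filter.1 (Finset.mem_coe.1 hB)
      exact hz ⟨y, hyB, hY0j y hy⟩
  have he0 : e 0 ∈ Y0 := Or.inl rfl
  have he1 : e 1 ∈ Y1 := Or.inl rfl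
  have hYA : ∀ y, y ∈ Y0 ∨ y ∈ Y1 → y ∈ A → y = e 0 ∨ y = e 1 := by
    rintro y ((rfl | ⟨B, hB, hyB⟩) | (rfl | ⟨B, hB, hyB⟩)) hyA
    · exact Or.inl rfl
    · exact hend B (Finset.mem_filter.1 (Finset.mem_coe.1 hB)).1 y hyB hyA
    · exact Or.inr rfl
    · exact hend B (Finset.mem_filter.1 (Finset.mem_coe.1 hB)).1 y hyB hyA
  have hA0 : ∀ y ∈ Y0, y ∈ A → y = e 0 := fun y hy hyA =>
    (hYA y (Or.inl hy) hyA).resolve_right fun h => hdisj y hy (h ▸ he1)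
  have hA1 : ∀ y ∈ Y1, y ∈ A → y = e 1 := fun y hy hyA =>
    (hYA y (Or.inr hy) hyA).resolve_left fun h => hdisj y (h ▸ he0) hy
  have hall : ∀ y, y ∈ Y0 ∨ y ∈ Y1 ∨ y ∈ A := by
    intro y
    have : y ∈ ⋃₀ (𝒜 : Set (Set X)) := by rw [hcov]; trivial
    obtain ⟨B, hB, hyB⟩ := this
    by_cases hBA : B = A
    · exact Or.inr (Or.inr (hBA ▸ hyB))
    · have hB𝓑 : B ∈ 𝓑 := Finset.mem_erase.2 ⟨hBA, hB⟩
      by_cases hR : ∃ y ∈ B, y = e 0 ∨ ArcJoined Z (e 0) y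
      · exact Or.inl (Or.inr ⟨B, Finset.mem_coe.2 (Finset.mem_filter.2 ⟨hB𝓑, hR⟩), hyB⟩)
      · exact Or.inr (Or.inl (Or.inr
          ⟨B, Finset.mem_coe.2 (Finset.mem_filter.2 ⟨hB𝓑, hR⟩), hyB⟩))
  set r : X → ℝ := fun y => if y ∈ Y0 then 0 else if y ∈ Y1 then 1 else ρ y with hr
  have r0 : ∀ y ∈ Y0, r y = 0 := fun y hy => if_pos hy
  have r1 : ∀ y ∈ Y1, r y = 1 := fun y hy => by
    have : y ∉ Y0 := fun h => hdisj y h hy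
    simp only [hr]; rw [if_neg this, if_pos hy]
  have rA : ∀ y ∈ A, r y = ρ y := by
    intro y hy
    by_cases h0 : y ∈ Y0
    · rw [r0 y h0, hA0 y h0 hy, P.re 0 (left_mem_Icc.2 zero_le_one)]
    · by_cases h1 : y ∈ Y1
      · rw [r1 y h1, hA1 y h1 hy, P.re 1 (right_mem_Icc.2 zero_le_one)]
      · simp only [hr]; rw [if_neg h0, if_neg h1]
  have hrc : Continuous r := by
    rw [← continuousOn_univ]
    have k0 : ContinuousOn r Y0 := continuousOn_const.congr r0
    have k1 : ContinuousOn r Y1 := continuousOn_const.congr r1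
    have kA : ContinuousOn r A := P.cr.congr rA
    have := (k0.union_of_isClosed k1 c0 c1).union_of_isClosed kA (c0.union c1) (hBc A hA)
    refine this.mono fun y _ => ?_
    rcases hall y with h | h | h
    · exact Or.inl (Or.inl h)
    · exact Or.inl (Or.inr h)
    · exact Or.inr h
  refine ⟨e, r, ⟨P.ce, hrc, fun t ht => by rw [rA _ (P.mem t), P.re t ht], ?_⟩, ?_⟩
  · intro y hy
    have hyA : y ∈ A := by
      rcases hall y with h | h | h
      · rw [r0 y h] at hy; exact absurd hy.1 (lt_irrefl _)
      · rw [r1 y h] at hy; exact absurd hy.2 (lt_irrefl _)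
      · exact h
    rw [rA y hyA, P.er y hyA]
  · intro hfin
    refine hAW (((hfin.union ((finite_singleton (0:ℝ)).union (finite_singleton 1))).image
      e).subset ?_)
    rintro y ⟨hyW, hyA⟩
    have h2 := P.rm y hyA
    have h3 := P.er y hyA
    refine ⟨ρ y, ?_, h3⟩
    rcases eq_or_lt_of_le h2.1 with h | h
    · exact Or.inr (Or.inl h.symm)
    rcases eq_or_lt_of_le h2.2 with h' | h'
    · exact Or.inr (Or.inr h')
    exact Or.inl ⟨⟨h, h'⟩, by rw [h3]; exact hyW⟩

/-- For a zero entropy tree map, every infinite ω-limit set is contained in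
the orbit of a periodic arc. -/
theorem infinite_omegaLimit_subset_arcOrbit {X : Type*} [MetricSpace X] (hX : IsTree X)
    (f : X → X) (hf : Continuous f) (h0 : topEntropy f = 0) (x : X)
    (hx : (omegaLimitSet f x).Infinite) :
    ∃ (I : Set X) (s : ℕ), IsPeriodicArc f I s ∧ omegaLimitSet f x ⊆ arcOrbit f I s := by
  haveI : CompactSpace X := hX.1
  obtain ⟨e, r, H, hT⟩ := exists_freeArc hX hx
  exact H.final hf h0 hx hT
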